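/- Let d₀ ≥ 2, M = 𝕋^{d₀} with normalized Haar measure ν and quotient metric d, and let T be the algebraic automorphism of 𝕋^{d₀} induced by S ∈ SL_{d₀}(ℤ) none of whose eigenvalues is a root of unity. Let η > 0 and let f : M → [0,1] be η-Hölder continuous with ∫_M f dν = 1/2. On the product probability space (M × (0,1)^ℤ, ν ⊗ λ^{⊗ℤ}) (λ Lebesgue measure on (0,1)) define ξ_k(ω, (z_m)_{m∈ℤ}) := 2·1_{{z_k ≤ f(T^k ω)}} − 1. Then (ξ_k)_{k∈ℤ} is stationary, centered with finite fourth moments, satisfies Σ_{p≥0} √(1+p) |E[ξ₀ξ_p]| < ∞ and sup_{N≥1} N^{−2} Σ_{k₁,k₂,k₃,k₄=0}^{N−1} |E[ξ_{k₁}ξ_{k₂}ξ_{k₃}ξ_{k₄}]| < ∞, and there exist C > 0, nonnegative (φ_{p,s}) with φ_{p+1,s} ≤ φ_{p,s}, and an integer r ≥ 1 with lim_{s→∞} √s φ_{rs,s} = 0, such that for all 0 ≤ n₁ ≤ n₂ ≤ n₃ ≤ n₄ and all reals α_k, β_k: |Cov(exp(i Σ_{k=n₁}^{n₂} α_k ξ_k),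 exp(i Σ_{k=n₃}^{n₄} β_k ξ_k))| ≤ C(1 + Σ|α_k| + Σ|β_k|) φ_{n₃−n₂, n₄−n₃}. -/

import Mathlib

open MeasureTheory ProbabilityTheory Filter

noncomputable section

/-- Number of visits of the walk `S` to site `k` among times `1,...,n` (local time). -/
def localTime {Ω : Type*} (S : ℕ → Ω → ℤ) (n : ℕ) (k : ℤ) (ω : Ω) : ℝ :=
  ((Finset.Icc 1 n).filter (fun j => S j ω = k)).card

/-- `S` is a simple symmetric random walk on `ℤ`: `S 0 = 0` and the increments are
i.i.d. uniform on `{-1, 1}`. -/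
structure IsSSRW {Ω : Type*} [MeasurableSpace Ω] (μ : Measure Ω) (S : ℕ → Ω → ℤ) : Prop where
  meas : ∀ n, Measurable (S n)
  init : ∀ ω, S 0 ω = 0
  indep : iIndepFun (fun n ω => S (n + 1) ω - S n ω) μ
  step_one : ∀ n, μ {ω | S (n + 1) ω - S n ω = 1} = 1 / 2
  step_neg_one : ∀ n, μ {ω | S (n + 1) ω - S n ω = -1} = 1 / 2

/-- Stationarity of the sequence `(ξ k)_{k ∈ ℤ}`: all finite dimensional distributions
are invariant under a shift of the index. -/
def IsStationarySeq {Ω : Type*} [MeasurableSpace Ω] (μ : Measure Ω) (ξ : ℤ → Ω → ℝ) : Prop :=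
  ∀ (j : ℤ) (q : ℕ) (k : Fin q → ℤ),
    Measure.map (fun ω i => ξ (k i + j) ω) μ = Measure.map (fun ω i => ξ (k i) ω) μ

/-- Covariance of two complex-valued random variables. -/
def covC {Ω : Type*} [MeasurableSpace Ω] (μ : Measure Ω) (U V : Ω → ℂ) : ℂ :=
  ∫ ω, U ω * V ω ∂μ - (∫ ω, U ω ∂μ) * (∫ ω, V ω ∂μ)

/-- Condition (3): `(ξ k)` is stationary, centered, with finite fourth moments. -/
def Cond3 {Ω : Type*} [MeasurableSpace Ω] (μ : Measure Ω) (ξ : ℤ → Ω → ℝ) : Prop :=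
  IsStationarySeq μ ξ ∧ (∀ k, ∫ ω, ξ k ω ∂μ = 0) ∧ ∀ k, Integrable (fun ω => (ξ k ω) ^ 4) μ

/-- Condition (4). -/
def Cond4 {Ω : Type*} [MeasurableSpace Ω] (μ : Measure Ω) (ξ : ℤ → Ω → ℝ) : Prop :=
  Summable (fun p : ℕ => Real.sqrt (1 + (p : ℝ)) * |∫ ω, ξ 0 ω * ξ (p : ℤ) ω ∂μ|) ∧
  ∃ B : ℝ, ∀ N : ℕ, 1 ≤ N →
    ∑ k₁ ∈ Finset.range N, ∑ k₂ ∈ Finset.range N, ∑ k₃ ∈ Finset.range N,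
      ∑ k₄ ∈ Finset.range N,
        |∫ ω, ξ (k₁ : ℤ) ω * ξ (k₂ : ℤ) ω * ξ (k₃ : ℤ) ω * ξ (k₄ : ℤ) ω ∂μ| ≤ B * (N : ℝ) ^ 2

/-- The covariance inequality of condition (5), for a given constant `C` and
family `φ`. -/
def Cond5Bound {Ω : Type*} [MeasurableSpace Ω] (μ : Measure Ω) (ξ : ℤ → Ω → ℝ)
    (C : ℝ) (φ : ℕ → ℕ → ℝ) : Prop :=
  ∀ n₁ n₂ n₃ n₄ : ℕ, n₁ ≤ n₂ → n₂ ≤ n₃ → n₃ ≤ n₄ → ∀ α β : ℕ → ℝ,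
    ‖covC μ
        (fun ω => Complex.exp (Complex.I * ((∑ k ∈ Finset.Icc n₁ n₂, α k * ξ (k : ℤ) ω : ℝ) : ℂ)))
        (fun ω => Complex.exp (Complex.I * ((∑ k ∈ Finset.Icc n₃ n₄, β k * ξ (k : ℤ) ω : ℝ) : ℂ)))‖
      ≤ C * (1 + ∑ k ∈ Finset.Icc n₁ n₂, |α k| + ∑ k ∈ Finset.Icc n₃ n₄, |β k|) *
          φ (n₃ - n₂) (n₄ - n₃)

/-- Condition (5). -/
def Cond5 {Ω : Type*} [MeasurableSpace Ω] (μ : Measure Ω) (ξ : ℤ → Ω → ℝ) : Prop :=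
  ∃ C : ℝ, 0 < C ∧ ∃ (φ : ℕ → ℕ → ℝ) (r : ℕ), 1 ≤ r ∧
    (∀ p s, 0 ≤ φ p s) ∧ (∀ p s, φ (p + 1) s ≤ φ p s) ∧
    Tendsto (fun s : ℕ => Real.sqrt s * φ (r * s) s) atTop (nhds 0) ∧
    Cond5Bound μ ξ C φ

/-- The iterate `T^k` for `k ∈ ℤ` of an invertible transformation `T`
with inverse `Tinv`. -/
def Titer {M : Type*} (T Tinv : M → M) : ℤ → M → M
  | Int.ofNat n => T^[n]
  | Int.negSucc n => Tinv^[n + 1]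

open scoped ENNReal
/-- The `d`-dimensional torus `ℝ^d/ℤ^d`, realised as `(ℝ/ℤ)^d`; it carries the product
(normalised Haar) measure `volume`. -/
abbrev Torus (d : ℕ) : Type := Fin d → AddCircle (1 : ℝ)

/-- The quotient metric on the torus induced by the Euclidean metric on `ℝ^d`
(here `‖·‖` is the quotient norm on `ℝ/ℤ`). -/
def torusDist {d : ℕ} (x y : Torus d) : ℝ := Real.sqrt (∑ i, ‖x i - y i‖ ^ 2)

/-- The algebraic endomorphism of the torus induced by an integer matrix `S`. -/
def torusAut {d : ℕ} (S : Matrix (Fin d) (Fin d) ℤ) (x : Torus d) : Torus d :=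
  fun i => ∑ j, S i j • x j

/-- `S` has no eigenvalue which is a root of unity. -/
def NoRootOfUnityEigenvalue {d : ℕ} (S : Matrix (Fin d) (Fin d) ℤ) : Prop :=
  ∀ z : ℂ, (Matrix.charpoly (S.map (fun a => (a : ℂ)))).IsRoot z →
    ∀ n : ℕ, n ≠ 0 → z ^ n ≠ 1

/-- The η-Hölder constant `C_g^{(η)}` of `g` (with value `∞` if `g` is not η-Hölder),
for the Euclidean quotient metric on the torus. -/
def holderC {d : ℕ} (η : ℝ) (g : Torus d → ℂ) : ℝ≥0∞ :=
  ⨆ (x : Torus d) (y : Torus d) (_ : x ≠ y),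
    ENNReal.ofReal (‖g x - g y‖ / torusDist x y ^ η)

/-- A real function on the torus is η-Hölder continuous (for the Euclidean quotient
metric). -/
def IsHolder {d : ℕ} (η : ℝ) (f : Torus d → ℝ) : Prop :=
  ∃ c : ℝ, ∀ x y : Torus d, |f x - f y| ≤ c * torusDist x y ^ η

/-- `μ₁` is the distribution on `(0,1)^ℤ ⊆ ℝ^ℤ` of an i.i.d. sequence of random variables
uniformly distributed on `(0,1)`; this characterises the product measure `λ^{⊗ℤ}` of
Lebesgue measures on `(0,1)`. -/
def IsIIDUniform (μ₁ : MeasureTheory.Measure (ℤ → ℝ)) : Prop :=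
  MeasureTheory.IsProbabilityMeasure μ₁ ∧
  ProbabilityTheory.iIndepFun (fun (k : ℤ) (z : ℤ → ℝ) => z k) μ₁ ∧
  ∀ k : ℤ, MeasureTheory.Measure.map (fun z : ℤ → ℝ => z k) μ₁ =
    MeasureTheory.volume.restrict (Set.Ioo (0 : ℝ) 1)

namespace TorusScenery

section LinearAlgebra

open Polynomial

/-- Powers of an endomorphism grow at most like `r ^ n` on generalized eigenvectors whose
eigenvalue has modulus less than `r`. -/
lemma exists_norm_pow_apply_le {V : Type*} [NormedAddCommGroup V] [NormedSpace ℂ V]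
    (A : Module.End ℂ V) {z : ℂ} {r : ℝ} (hr : ‖z‖ < r) (N : ℕ) (v : V)
    (hv : ((A - z • (1 : Module.End ℂ V)) ^ N) v = 0) :
    ∃ C : ℝ, 0 ≤ C ∧ ∀ n : ℕ, ‖(A ^ n) v‖ ≤ C * r ^ n := by
  have hr0 : 0 < r := (norm_nonneg z).trans_lt hr
  induction N generalizing v with
  | zero =>
    have : v = 0 := by simpa using hv
    exact ⟨0, le_rfl, fun n => by simp [this]⟩
  | succ N ih =>
    obtain ⟨C, hC, h⟩ := ih ((A - z • (1 : Module.End ℂ V)) v) (by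
      rw [← Module.End.mul_apply, ← pow_succ]; exact hv)
    have hgap : 0 < r - ‖z‖ := sub_pos.2 hr
    refine ⟨max ‖v‖ (C / (r - ‖z‖)), le_max_of_le_left (norm_nonneg _), fun n => ?_⟩
    set D := max ‖v‖ (C / (r - ‖z‖)) with hD
    have hDC : C ≤ D * (r - ‖z‖) := (div_le_iff₀ hgap).1 (le_max_right _ _)
    induction n with
    | zero => rw [pow_zero, pow_zero, mul_one]; exact le_max_left _ _
    | succ n ihn =>
      have e : (A ^ (n + 1)) v =
          z • (A ^ n) v + (A ^ n) ((A - z • (1 : Module.End ℂ V)) v) := by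
        rw [pow_succ, Module.End.mul_apply]
        simp
      calc ‖(A ^ (n + 1)) v‖ ≤ ‖z‖ * ‖(A ^ n) v‖
            + ‖(A ^ n) ((A - z • (1 : Module.End ℂ V)) v)‖ := by
            rw [e]; exact (norm_add_le _ _).trans (by rw [norm_smul])
        _ ≤ ‖z‖ * (D * r ^ n) + C * r ^ n := by gcongr; exact h n
        _ ≤ ‖z‖ * (D * r ^ n) + D * (r - ‖z‖) * r ^ n := by gcongr
        _ = D * r ^ (n + 1) := by ring

/-- Every vector is the sum of a vector contracted exponentially by the inverse `B` of `A` and a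
vector on which `A` has subexponential growth. -/
lemma exists_unstable_add_centerStable {V : Type*} [NormedAddCommGroup V] [NormedSpace ℂ V]
    [FiniteDimensional ℂ V] (A B : Module.End ℂ V) (hBA : B * A = 1) (hAB : A * B = 1) (v : V) :
    ∃ u c : V, v = u + c ∧
      (∃ θ : ℝ, 0 < θ ∧ θ < 1 ∧ ∃ C : ℝ, 0 ≤ C ∧ ∀ n : ℕ, ‖(B ^ n) u‖ ≤ C * θ ^ n) ∧
      ∀ r : ℝ, 1 < r → ∃ C : ℝ, 0 ≤ C ∧ ∀ n : ℕ, ‖(A ^ n) c‖ ≤ C * r ^ n := by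
  have hv : v ∈ ⨆ z : ℂ, A.maxGenEigenspace z := by
    rw [Module.End.iSup_maxGenEigenspace_eq_top]; trivial
  induction hv using Submodule.iSup_induction' with
  | mem z w hw =>
    obtain ⟨N, hN⟩ := Module.End.mem_maxGenEigenspace A z w |>.1 hw
    by_cases hz : ‖z‖ ≤ 1
    · exact ⟨0, w, by simp, ⟨1 / 2, by norm_num, by norm_num, 0, le_rfl, by simp⟩,
        fun r hr => exists_norm_pow_apply_le A (hz.trans_lt hr) N w hN⟩
    · push Not at hz
      have hz0 : z ≠ 0 := by rintro rfl; simp at hz; linarith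
      have hz1 : ‖z⁻¹‖ < 1 := by rw [norm_inv]; exact inv_lt_one_of_one_lt₀ hz
      obtain ⟨θ, h1, h2⟩ := exists_between hz1
      refine ⟨w, 0, by simp, ⟨θ, (norm_nonneg _).trans_lt h1, h2, ?_⟩,
        fun r _ => ⟨0, le_rfl, by simp⟩⟩
      refine exists_norm_pow_apply_le B h1 N w ?_
      have e : B - z⁻¹ • (1 : Module.End ℂ V) =
          (-z⁻¹) • (B * (A - z • (1 : Module.End ℂ V))) := by
        rw [mul_sub, hBA, smul_sub, mul_smul_comm, mul_one, smul_smul, neg_mul,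
          inv_mul_cancel₀ hz0]
        simp [sub_eq_add_neg, add_comm]
      have hcomm : Commute B (A - z • (1 : Module.End ℂ V)) := by
        refine Commute.sub_right (hBA.trans hAB.symm) ?_
        exact (Commute.one_right B).smul_right z
      rw [e, _root_.smul_pow, hcomm.mul_pow, LinearMap.smul_apply, Module.End.mul_apply, hN]
      simp
  | zero =>
    exact ⟨0, 0, by simp, ⟨1 / 2, by norm_num, by norm_num, 0, le_rfl, by simp⟩,
      fun r _ => ⟨0, le_rfl, by simp⟩⟩
  | add x y _ _ hx hy =>
    obtain ⟨u, c, rfl, ⟨θ, h0, h1, C, hC, hu⟩, hc⟩ := hx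
    obtain ⟨u', c', rfl, ⟨θ', h0', h1', C', hC', hu'⟩, hc'⟩ := hy
    refine ⟨u + u', c + c', by abel, ⟨max θ θ', lt_max_of_lt_left h0, max_lt h1 h1', C + C',
      by positivity, fun n => ?_⟩, fun r hr => ?_⟩
    · rw [map_add, add_mul]
      refine (norm_add_le _ _).trans (add_le_add ((hu n).trans ?_) ((hu' n).trans ?_))
      · gcongr; exact le_max_left _ _
      · gcongr; exact le_max_right _ _
    · obtain ⟨D, hD, h⟩ := hc r hr
      obtain ⟨D', hD', h'⟩ := hc' r hr
      refine ⟨D + D', by positivity, fun n => ?_⟩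
      rw [map_add, add_mul]
      exact (norm_add_le _ _).trans (add_le_add (h n) (h' n))

/-- A nonzero algebraic integer which is not a root of unity has a conjugate outside the closed
unit disk. -/
lemma exists_conjugate_norm_gt_one {z : ℂ} (hz : IsIntegral ℤ z) (hz0 : z ≠ 0)
    (hroot : ∀ n : ℕ, n ≠ 0 → z ^ n ≠ 1) :
    ∃ w : ℂ, 1 < ‖w‖ ∧ ∀ P : ℤ[X], aeval z P = 0 → aeval w P = 0 := by
  let K := IntermediateField.adjoin ℚ {z}
  let : NumberField K := {
    to_charZero := inferInstance
    to_finiteDimensional := IntermediateField.adjoin.finiteDimensional hz.tower_top }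
  let y : K := ⟨z, IntermediateField.mem_adjoin_simple_self ℚ z⟩
  have hyi : IsIntegral ℤ y := IntermediateField.coe_isIntegral_iff.mp hz
  have hy0 : y ≠ 0 := Subtype.coe_ne_coe.mp hz0
  by_contra! hcon
  have H (ψ : K →+* ℂ) (p : ℤ[X]) : ψ ((aeval y) p) = (aeval (ψ y)) p := by
    conv_rhs => rw [← Polynomial.map_id (p := p)]
    exact p.map_aeval_eq_aeval_map (by ext; simp) y
  obtain ⟨n, hn, h⟩ := NumberField.Embeddings.pow_eq_one_of_norm_le_one (x := y) K ℂ hy0 hyi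
    fun φ => by
      by_contra! hφ
      obtain ⟨P, hP, hP'⟩ := hcon (φ y) hφ
      apply hP'
      have h1 := H (algebraMap K ℂ) P
      have h2 : algebraMap K ℂ y = z := rfl
      rw [h2, hP, map_eq_zero_iff _ (algebraMap K ℂ).injective] at h1
      rw [← H, h1, map_zero]
  exact hroot n hn.ne' (congrArg (algebraMap K ℂ) h)

/-- A nonzero polynomial with coefficients in `{-1, 0, 1}` has no root of modulus at least `2`. -/
lemma aeval_ne_zero_of_abs_coeff_le_one {P : ℤ[X]} (hP : P ≠ 0) (hcoeff : ∀ n, |P.coeff n| ≤ 1)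
    {z : ℂ} (hz : 2 ≤ ‖z‖) : aeval z P ≠ 0 := by
  intro h
  have hmap : P.map (Int.castRingHom ℂ) ≠ 0 :=
    (Polynomial.map_ne_zero_iff (RingHom.injective_int _)).2 hP
  have hroot : (P.map (Int.castRingHom ℂ)).IsRoot z := by
    rw [IsRoot, eval_map]; simpa [aeval_def] using h
  have hb := hroot.norm_lt_cauchyBound hmap
  have hn (n : ℕ) : ‖(P.map (Int.castRingHom ℂ)).coeff n‖₊ ≤ 1 := by
    rw [← NNReal.coe_le_coe, coe_nnnorm, coeff_map]
    simp only [eq_intCast, Complex.norm_intCast, NNReal.coe_one]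
    exact_mod_cast hcoeff n
  have hlead : ‖(P.map (Int.castRingHom ℂ)).leadingCoeff‖₊ = 1 := by
    refine le_antisymm (hn _) ?_
    rw [leadingCoeff_map_of_injective (RingHom.injective_int _), ← NNReal.coe_le_coe, coe_nnnorm]
    simp only [eq_intCast, Complex.norm_intCast, NNReal.coe_one]
    exact_mod_cast Int.one_le_abs (leadingCoeff_ne_zero.2 hP)
  have : cauchyBound (P.map (Int.castRingHom ℂ)) ≤ 2 := by
    rw [cauchyBound, hlead, div_one, ← one_add_one_eq_two]
    gcongr
    exact Finset.sup_le fun n _ => hn n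
  have : ((cauchyBound (P.map (Int.castRingHom ℂ)) : NNReal) : ℝ) ≤ 2 := by exact_mod_cast this
  have hb' : ‖z‖ < ((cauchyBound (P.map (Int.castRingHom ℂ)) : NNReal) : ℝ) := by exact_mod_cast hb
  linarith

lemma charpoly_map_intCast {d : ℕ} (S : Matrix (Fin d) (Fin d) ℤ) :
    Matrix.charpoly (S.map (fun a => (a : ℂ))) = S.charpoly.map (Int.castRingHom ℂ) :=
  (Matrix.charpoly_map S (Int.castRingHom ℂ))

/-- A polynomial in `S` annihilating a nonzero integer vector vanishes at an eigenvalue of `S`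
outside the closed unit disk. -/
lemma exists_unstable_root_of_vecMul_eq_zero {d : ℕ} {S : Matrix (Fin d) (Fin d) ℤ}
    (hdet : S.det = 1) (hEig : NoRootOfUnityEigenvalue S) {k : Fin d → ℤ} (hk : k ≠ 0)
    {P : ℤ[X]} (hP : Matrix.vecMul k (aeval S P) = 0) :
    ∃ w : ℂ, 1 < ‖w‖ ∧ aeval w S.charpoly = 0 ∧ aeval w P = 0 := by
  obtain ⟨z, hzP, hzS⟩ : ∃ z : ℂ, aeval z P = 0 ∧ aeval z S.charpoly = 0 := by
    by_contra! hcon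
    have hcop : IsCoprime (P.map (Int.castRingHom ℂ)) (S.charpoly.map (Int.castRingHom ℂ)) := by
      rw [Polynomial.isCoprime_iff_aeval_ne_zero_of_isAlgClosed (K := ℂ) ℂ]
      intro a
      by_cases ha : aeval a P = 0
      · right
        simpa [aeval_def, eval₂_map, eval_map] using hcon a ha
      · left
        simpa [aeval_def, eval₂_map, eval_map] using ha
    obtain ⟨a, b, hab⟩ := hcop
    let SC := S.map (Int.castRingHom ℂ)
    have hcast (p : ℤ[X]) : aeval SC (p.map (Int.castRingHom ℂ)) =
        (aeval S p).map (Int.castRingHom ℂ) := by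
      rw [← algebraMap_int_eq ℂ, Polynomial.aeval_map_algebraMap]
      exact Polynomial.aeval_algHom_apply
        ((Int.castRingHom ℂ).mapMatrix (m := Fin d)).toIntAlgHom S p
    have h1 : Matrix.vecMul (fun i => (k i : ℂ)) (aeval SC (P.map (Int.castRingHom ℂ))) = 0 := by
      rw [hcast]
      have := congrArg (fun v : Fin d → ℤ => fun i => ((v i : ℤ) : ℂ)) hP
      ext i
      have := congrFun this i
      simpa [Matrix.vecMul, dotProduct] using this
    have h2 : aeval SC (S.charpoly.map (Int.castRingHom ℂ)) = 0 := by
      rw [hcast, Matrix.aeval_self_charpoly]; ext; simp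
    have h3 := congrArg (aeval SC) hab
    rw [map_add, map_mul, map_mul, h2, mul_zero, add_zero, map_one, ← map_mul, mul_comm,
      map_mul] at h3
    have h4 : Matrix.vecMul (fun i => (k i : ℂ)) (1 : Matrix (Fin d) (Fin d) ℂ) = 0 := by
      rw [← h3, ← Matrix.vecMul_vecMul, h1, Matrix.zero_vecMul]
    rw [Matrix.vecMul_one] at h4
    apply hk
    ext i
    have := congrFun h4 i
    simpa using this
  have hzroot : (Matrix.charpoly (S.map (fun a => (a : ℂ)))).IsRoot z := by
    rw [charpoly_map_intCast, IsRoot, eval_map]; simpa [aeval_def] using hzS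
  have hzint : IsIntegral ℤ z := ⟨S.charpoly, S.charpoly_monic, by simpa [aeval_def] using hzS⟩
  have hz0 : z ≠ 0 := by
    rintro rfl
    have h : S.charpoly.coeff 0 = 0 := by
      have := hzS
      rw [← coeff_zero_eq_aeval_zero'] at this
      simpa using this
    have h' := Matrix.det_eq_sign_charpoly_coeff S
    rw [h, mul_zero, hdet] at h'
    exact one_ne_zero h'
  obtain ⟨w, hw, h⟩ := exists_conjugate_norm_gt_one hzint hz0 (hEig z hzroot)
  exact ⟨w, hw, h _ hzS, h _ hzP⟩

/-- Some power of every unstable eigenvalue of `S` has modulus at least `2`, with a common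
exponent. -/
lemma exists_pow_two_le_norm {P : ℤ[X]} (hP : P ≠ 0) :
    ∃ m : ℕ, 0 < m ∧ ∀ w : ℂ, 1 < ‖w‖ → aeval w P = 0 → 2 ≤ ‖w‖ ^ m := by
  have hfin : {w : ℂ | aeval w P = 0}.Finite := by
    refine (P.rootSet_finite ℂ).subset fun w hw => ?_
    rw [mem_rootSet]; exact ⟨hP, hw⟩
  have h (w : ℂ) : ∀ᶠ m : ℕ in atTop, 1 < ‖w‖ → 2 ≤ ‖w‖ ^ m := by
    by_cases hw : 1 < ‖w‖
    · filter_upwards [(tendsto_pow_atTop_atTop_of_one_lt hw).eventually_ge_atTop 2] with m hm _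
      exact hm
    · exact Eventually.of_forall fun m h => absurd h hw
  have := (hfin.eventually_all (p := fun w (m : ℕ) => 1 < ‖w‖ → 2 ≤ ‖w‖ ^ m) (l := atTop)).2
    fun w _ => h w
  obtain ⟨m, hm, h0⟩ := (this.and (eventually_gt_atTop 0)).exists
  exact ⟨m, h0, fun w hw hwP => hm w hwP hw⟩

end LinearAlgebra

section Diophantine

open Polynomial

/-- The pairing of the integer vector `k` with `(S ^ n) u`. -/
def pairing {d : ℕ} (S : Matrix (Fin d) (Fin d) ℤ) (k : Fin d → ℤ) (n : ℕ) (u : Fin d → ℂ) : ℂ :=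
  (fun i => (k i : ℂ)) ⬝ᵥ ((S.map (fun a => (a : ℂ))) ^ n).mulVec u

lemma map_intCast_pow {d : ℕ} (S : Matrix (Fin d) (Fin d) ℤ) (n : ℕ) :
    (S ^ n).map (fun a => (a : ℂ)) = (S.map (fun a => (a : ℂ))) ^ n :=
  map_pow ((Int.castRingHom ℂ).mapMatrix (m := Fin d)) S n

lemma map_intCast_mul {d : ℕ} (S S' : Matrix (Fin d) (Fin d) ℤ) :
    (S * S').map (fun a => (a : ℂ)) = S.map (fun a => (a : ℂ)) * S'.map (fun a => (a : ℂ)) :=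
  map_mul ((Int.castRingHom ℂ).mapMatrix (m := Fin d)) S S'

lemma map_intCast_one {d : ℕ} :
    (1 : Matrix (Fin d) (Fin d) ℤ).map (fun a => (a : ℂ)) = 1 :=
  map_one ((Int.castRingHom ℂ).mapMatrix (m := Fin d))

lemma intCast_vecMul_pow {d : ℕ} (S : Matrix (Fin d) (Fin d) ℤ) (k : Fin d → ℤ) (n : ℕ)
    (i : Fin d) : ((Matrix.vecMul k (S ^ n) i : ℤ) : ℂ) = pairing S k n (Pi.single i 1) := by
  rw [pairing, ← map_intCast_pow]
  simp [Matrix.vecMul, dotProduct]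

lemma norm_pairing_le {d : ℕ} (S : Matrix (Fin d) (Fin d) ℤ) (k : Fin d → ℤ) (n : ℕ)
    (u : Fin d → ℂ) {R D : ℝ} (hk : ∀ i, |(k i : ℝ)| ≤ R)
    (hD : ‖((S.map (fun a => (a : ℂ))) ^ n).mulVec u‖ ≤ D) :
    ‖pairing S k n u‖ ≤ d * (R * D) := by
  rw [pairing, dotProduct]
  refine (norm_sum_le _ _).trans ?_
  have : ∀ i ∈ (Finset.univ : Finset (Fin d)),
      ‖(k i : ℂ) * ((S.map (fun a => (a : ℂ))) ^ n).mulVec u i‖ ≤ R * D := fun i _ => by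
    rw [norm_mul, Complex.norm_intCast]
    exact mul_le_mul (hk i) ((norm_le_pi_norm _ i).trans hD) (norm_nonneg _)
      ((abs_nonneg _).trans (hk i))
  refine (Finset.sum_le_sum this).trans ?_
  simp

/-- If `2 ^ L` exceeds the number of integer vectors with entries bounded by `B`, a nontrivial
combination with coefficients in `{-1, 0, 1}` of the vectors `k * S ^ (m * n)`, `n < L`, vanishes
as soon as all partial sums are bounded by `B`. -/
lemma exists_annihilator_of_card_lt {d : ℕ} (S : Matrix (Fin d) (Fin d) ℤ) (k : Fin d → ℤ)
    (m L B : ℕ) (hcard : (2 * B + 1) ^ d < 2 ^ L)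
    (hB : ∀ i, ∑ n ∈ Finset.range L, |Matrix.vecMul k (S ^ (m * n)) i| ≤ B) :
    ∃ P : ℤ[X], P ≠ 0 ∧ (∀ n, |P.coeff n| ≤ 1) ∧
      Matrix.vecMul k (aeval S (expand ℤ m P)) = 0 := by
  classical
  let F : Finset ℕ → Fin d → ℤ := fun A i => ∑ n ∈ A, Matrix.vecMul k (S ^ (m * n)) i
  have hmaps : ∀ A ∈ (Finset.range L).powerset,
      F A ∈ Fintype.piFinset (fun _ : Fin d => Finset.Icc (-(B : ℤ)) B) := fun A hA => by
    rw [Fintype.mem_piFinset]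
    intro i
    rw [Finset.mem_Icc, ← abs_le]
    calc |F A i| ≤ ∑ n ∈ A, |Matrix.vecMul k (S ^ (m * n)) i| := Finset.abs_sum_le_sum_abs _ _
      _ ≤ ∑ n ∈ Finset.range L, |Matrix.vecMul k (S ^ (m * n)) i| :=
        Finset.sum_le_sum_of_subset_of_nonneg (Finset.mem_powerset.1 hA)
          fun _ _ _ => abs_nonneg _
      _ ≤ B := hB i
  obtain ⟨A, hA, A', hA', hne, heq⟩ := Finset.exists_ne_map_eq_of_card_lt_of_maps_to (by
    rw [Finset.card_powerset, Finset.card_range, Fintype.card_piFinset]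
    simp only [Int.card_Icc, Finset.prod_const, Finset.card_univ, Fintype.card_fin]
    convert hcard using 2
    omega) hmaps
  have hcoeff (A : Finset ℕ) (n : ℕ) :
      (∑ j ∈ A, (X : ℤ[X]) ^ j).coeff n = if n ∈ A then 1 else 0 := by
    simp [coeff_X_pow]
  refine ⟨∑ j ∈ A, X ^ j - ∑ j ∈ A', X ^ j, fun h0 => hne ?_, fun n => ?_, ?_⟩
  · ext n
    have := congrArg (fun p => coeff p n) h0
    simp only [coeff_sub, hcoeff, coeff_zero] at this
    by_cases h : n ∈ A <;> by_cases h' : n ∈ A' <;> simp_all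
  · rw [coeff_sub, hcoeff, hcoeff]
    split_ifs <;> simp
  · ext i
    have := congrFun heq i
    simp only [F] at this
    have hs (A : Finset ℕ) : Matrix.vecMul k (∑ j ∈ A, S ^ (m * j)) i =
        ∑ n ∈ A, Matrix.vecMul k (S ^ (m * n)) i := by
      simp only [Matrix.vecMul, dotProduct, Matrix.sum_apply, Finset.mul_sum]
      exact Finset.sum_comm
    simp only [expand_aeval, map_sub, map_sum, map_pow, aeval_X, ← pow_mul]
    rw [Matrix.vecMul_sub, Pi.sub_apply, hs, hs, this, sub_self, Pi.zero_apply]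

lemma exists_card_bound {d : ℕ} (hd : 0 < d) {τ : ℝ} (hτ : 1 < τ) (hτ2 : τ ^ (4 * d) = 2)
    {D : ℝ} (hD : 0 ≤ D) :
    ∃ κ : ℕ, ∀ J : ℕ, ∀ L : ℕ, L = κ * (J + 1) → ∀ B : ℕ,
      (B : ℝ) ≤ L * (1 + D * (2 ^ J * τ ^ L)) → (2 * B + 1) ^ d < 2 ^ L := by
  have hlim : Tendsto (fun n : ℕ => (n : ℝ) ^ 1 / τ ^ n) atTop (nhds 0) :=
    tendsto_pow_const_div_const_pow_of_one_lt 1 hτ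
  have hpos : 0 < 1 / (3 * (1 + D)) := by positivity
  obtain ⟨L₀, hL₀⟩ := eventually_atTop.1 (hlim.eventually_le_const hpos)
  refine ⟨max (max L₀ 1) (4 * d), fun J L hL B hB => ?_⟩
  have h1 : L₀ ≤ L := by rw [hL]; nlinarith [le_max_left (max L₀ 1) (4 * d), le_max_left L₀ 1]
  have h2 : 1 ≤ L := by rw [hL]; nlinarith [le_max_left (max L₀ 1) (4 * d), le_max_right L₀ 1]
  have h3 : 4 * d * J ≤ L := by rw [hL]; nlinarith [le_max_right (max L₀ 1) (4 * d)]
  have hτL : (0 : ℝ) < τ ^ L := by positivity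
  have hτL1 : (1 : ℝ) ≤ τ ^ L := one_le_pow₀ hτ.le
  have hL1 : (1 : ℝ) ≤ L := by exact_mod_cast h2
  have hlin : 3 * L * (1 + D) ≤ τ ^ L := by
    have := hL₀ L h1
    rw [pow_one, div_le_div_iff₀ hτL (by positivity)] at this
    linarith
  have h2J : (2 : ℝ) ^ J ≤ τ ^ L := by
    rw [← hτ2, ← pow_mul]; exact pow_le_pow_right₀ hτ.le h3
  have h2J1 : (1 : ℝ) ≤ 2 ^ J := one_le_pow₀ (by norm_num)
  have hprod : (1 : ℝ) ≤ 2 ^ J * τ ^ L := one_le_mul_of_one_le_of_one_le h2J1 hτL1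
  have hmain : (2 * (B : ℝ) + 1) < τ ^ (4 * L) := by
    calc 2 * (B : ℝ) + 1 ≤ 2 * (L * (1 + D * (2 ^ J * τ ^ L))) + 1 := by gcongr
      _ ≤ 2 * (L * ((1 + D) * (2 ^ J * τ ^ L))) + L * ((1 + D) * (2 ^ J * τ ^ L)) := by
        have : 1 + D * (2 ^ J * τ ^ L) ≤ (1 + D) * (2 ^ J * τ ^ L) := by linarith
        have h' : 1 ≤ L * ((1 + D) * (2 ^ J * τ ^ L)) :=
          one_le_mul_of_one_le_of_one_le hL1
            (one_le_mul_of_one_le_of_one_le (by linarith) hprod)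
        gcongr
      _ = (3 * L * (1 + D)) * (2 ^ J * τ ^ L) := by ring
      _ ≤ τ ^ L * (τ ^ L * τ ^ L) := by gcongr
      _ = τ ^ (3 * L) := by ring
      _ < τ ^ (4 * L) := pow_lt_pow_right₀ hτ (by omega)
  have : ((2 * (B : ℝ) + 1)) ^ d < 2 ^ L := by
    calc (2 * (B : ℝ) + 1) ^ d < (τ ^ (4 * L)) ^ d := by gcongr
      _ = 2 ^ L := by rw [← hτ2, ← pow_mul, ← pow_mul]; congr 1; ring
  exact_mod_cast this

/-- There are finitely many unstable vectors such that every nonzero integer vector of size at most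
`2 ^ J` pairs nontrivially with one of their images under `S ^ n`, for some `n` linear in `J`. -/
lemma exists_unstable_vectors {d : ℕ} (hd : 0 < d) {S : Matrix (Fin d) (Fin d) ℤ}
    (hdet : S.det = 1) (hEig : NoRootOfUnityEigenvalue S) :
    ∃ (u : Fin d → Fin d → ℂ) (θ C : ℝ) (κ : ℕ), 0 < θ ∧ θ < 1 ∧ 0 ≤ C ∧
      (∀ i n, ‖((S⁻¹.map (fun a => (a : ℂ))) ^ n).mulVec (u i)‖ ≤ C * θ ^ n) ∧
      ∀ (J : ℕ) (k : Fin d → ℤ), k ≠ 0 → (∀ i, |k i| ≤ 2 ^ J) →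
        ∃ n < κ * (J + 1), ∃ i, 1 ≤ ‖pairing S k n (u i)‖ := by
  set SC := S.map (fun a => (a : ℂ)) with hSC
  set SC' := S⁻¹.map (fun a => (a : ℂ)) with hSC'
  have hunit : IsUnit S.det := by rw [hdet]; exact isUnit_one
  have h1 : SC' * SC = 1 := by
    rw [hSC, hSC', ← map_intCast_mul, Matrix.nonsing_inv_mul S hunit, map_intCast_one]
  have h2 : SC * SC' = 1 := by
    rw [hSC, hSC', ← map_intCast_mul, Matrix.mul_nonsing_inv S hunit, map_intCast_one]
  obtain ⟨m, hm, hm2⟩ := exists_pow_two_le_norm S.charpoly_monic.ne_zero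
  have hdec (i : Fin d) := exists_unstable_add_centerStable (Matrix.toLin' SC) (Matrix.toLin' SC')
    (by rw [Module.End.mul_eq_comp, ← Matrix.toLin'_mul, h1, Matrix.toLin'_one]; rfl)
    (by rw [Module.End.mul_eq_comp, ← Matrix.toLin'_mul, h2, Matrix.toLin'_one]; rfl)
    (Pi.single i 1)
  simp only [← Matrix.toLin'_pow, Matrix.toLin'_apply] at hdec
  choose u c huc hu hc using hdec
  choose θ hθ0 hθ1 C hC hu using hu
  obtain ⟨θ', hθ'⟩ : ∃ θ' : ℝ, ∀ i : Option (Fin d), (i.elim (1 / 2) θ : ℝ) < θ' ∧ θ' < 1 := by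
    refine (eventually_all.2 fun i => ?_ : ∀ᶠ x in nhdsWithin (1 : ℝ) (Set.Iio 1), _).exists
    refine Ioo_mem_nhdsLT ?_
    cases i with
    | none => norm_num
    | some i => exact hθ1 i
  have hθ'0 : 0 < θ' := lt_trans (by norm_num) (hθ' none).1
  set r : ℝ := 2 ^ (1 / (m * (4 * d) : ℝ)) with hr
  have hmd : (0 : ℝ) < m * (4 * d) := by positivity
  have hr1 : 1 < r := Real.one_lt_rpow (by norm_num) (by positivity)
  have hτ1 : 1 < r ^ m := one_lt_pow₀ hr1 hm.ne'
  have hτ2 : (r ^ m) ^ (4 * d) = 2 := by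
    rw [← pow_mul, hr, ← Real.rpow_natCast, ← Real.rpow_mul (by norm_num)]
    push_cast
    rw [one_div_mul_cancel hmd.ne', Real.rpow_one]
  choose D hD hcD using fun i => hc i r hr1
  have hDs : 0 ≤ ∑ i, D i := Finset.sum_nonneg fun i _ => hD i
  obtain ⟨κ, hκ⟩ := exists_card_bound hd hτ1 hτ2 (D := d * ∑ i, D i) (by positivity)
  refine ⟨u, θ', ∑ i, C i, m * κ, hθ'0, (hθ' none).2, Finset.sum_nonneg fun i _ => hC i,
    fun i n => (hu i n).trans ?_, fun J k hk hkJ => ?_⟩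
  · have h3 : θ i ^ n ≤ θ' ^ n := pow_le_pow_left₀ (hθ0 i).le (hθ' (some i)).1.le n
    have h4 : C i ≤ ∑ i, C i := Finset.single_le_sum (fun i _ => hC i) (Finset.mem_univ i)
    have := (hθ0 i).le
    gcongr
    exact (hC i).trans h4
  by_contra! hcon
  set L := κ * (J + 1) with hL
  have hentry (i : Fin d) (n : ℕ) (hn : n < L) :
      |((Matrix.vecMul k (S ^ (m * n)) i : ℤ) : ℝ)| ≤ 1 + (d * ∑ i, D i) * (2 ^ J * (r ^ m) ^ L) := by
    have e : ((Matrix.vecMul k (S ^ (m * n)) i : ℤ) : ℂ) =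
        pairing S k (m * n) (u i) + pairing S k (m * n) (c i) := by
      rw [intCast_vecMul_pow, huc i, pairing, Matrix.mulVec_add, dotProduct_add]; rfl
    have hle : ‖pairing S k (m * n) (c i)‖ ≤ d * (2 ^ J * (D i * r ^ (m * n))) :=
      norm_pairing_le S k _ _ (fun i => by exact_mod_cast hkJ i) (hcD i _)
    have hle' : D i * r ^ (m * n) ≤ (∑ i, D i) * (r ^ m) ^ L := by
      rw [← pow_mul]
      gcongr
      · exact Finset.single_le_sum (fun i _ => hD i) (Finset.mem_univ i)
      · exact hr1.le
    have hlt := hcon (m * n) (by rw [mul_assoc]; gcongr) i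
    rw [← Complex.norm_intCast, e]
    refine (norm_add_le _ _).trans (add_le_add hlt.le (hle.trans ?_))
    calc d * (2 ^ J * (D i * r ^ (m * n))) ≤ d * (2 ^ J * ((∑ i, D i) * (r ^ m) ^ L)) := by gcongr
      _ = _ := by ring
  set B := ⌊(L : ℝ) * (1 + (d * ∑ i, D i) * (2 ^ J * (r ^ m) ^ L))⌋₊ with hB
  have hnn : 0 ≤ (L : ℝ) * (1 + (d * ∑ i, D i) * (2 ^ J * (r ^ m) ^ L)) := by positivity
  obtain ⟨P, hP0, hPc, hPk⟩ := exists_annihilator_of_card_lt S k m L B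
    (hκ J L hL B (Nat.floor_le hnn)) (fun i => by
      have : ∑ n ∈ Finset.range L, |((Matrix.vecMul k (S ^ (m * n)) i : ℤ) : ℝ)| ≤
          L * (1 + (d * ∑ i, D i) * (2 ^ J * (r ^ m) ^ L)) := by
        refine (Finset.sum_le_sum fun n hn => hentry i n (Finset.mem_range.1 hn)).trans ?_
        rw [Finset.sum_const, Finset.card_range, nsmul_eq_mul]
      have h5 : (((∑ n ∈ Finset.range L, |Matrix.vecMul k (S ^ (m * n)) i|).toNat : ℕ) : ℝ) ≤
          L * (1 + (d * ∑ i, D i) * (2 ^ J * (r ^ m) ^ L)) := by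
        refine le_trans (le_of_eq ?_) this
        have : ((∑ n ∈ Finset.range L, |Matrix.vecMul k (S ^ (m * n)) i|).toNat : ℤ) =
          ∑ n ∈ Finset.range L, |Matrix.vecMul k (S ^ (m * n)) i| :=
          Int.toNat_of_nonneg (Finset.sum_nonneg fun _ _ => abs_nonneg _)
        have := congrArg (fun x : ℤ => (x : ℝ)) this
        push_cast at this
        exact this
      have := Nat.le_floor h5
      omega)
  obtain ⟨w, hw, hwS, hwP⟩ := exists_unstable_root_of_vecMul_eq_zero hdet hEig hk hPk
  rw [expand_aeval] at hwP
  refine aeval_ne_zero_of_abs_coeff_le_one hP0 hPc (z := w ^ m) ?_ hwP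
  rw [norm_pow]
  exact hm2 w hw hwS

/-- For a nonzero integer vector `k` of size at most `2 ^ J` and `p` large compared to `J` there is
a small unstable real vector on which the character of index `k * S ^ p` takes the value `-1`. -/
lemma exists_unstable_half_vector {d : ℕ} (hd : 0 < d) {S : Matrix (Fin d) (Fin d) ℤ}
    (hdet : S.det = 1) (hEig : NoRootOfUnityEigenvalue S) :
    ∃ (θ C : ℝ) (κ : ℕ), 0 < θ ∧ θ < 1 ∧ 0 ≤ C ∧
      ∀ (J : ℕ) (k : Fin d → ℤ), k ≠ 0 → (∀ i, |k i| ≤ 2 ^ J) → ∀ p : ℕ, κ * (J + 1) ≤ p →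
        ∃ v : Fin d → ℝ, (∑ i, ((Matrix.vecMul k (S ^ p) i : ℤ) : ℝ) * v i = 1 / 2) ∧
          ∀ (j : ℕ) (i : Fin d),
            |(((S⁻¹) ^ j).map (fun a => (a : ℝ))).mulVec v i| ≤ C * θ ^ (p - κ * (J + 1)) := by
  obtain ⟨u, θ, C, κ, hθ0, hθ1, hC, hu, hpair⟩ := exists_unstable_vectors hd hdet hEig
  refine ⟨θ, C, κ, hθ0, hθ1, hC, fun J k hk hkJ p hp => ?_⟩
  obtain ⟨n, hn, i, hi⟩ := hpair J k hk hkJ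
  have hunit : IsUnit S.det := by rw [hdet]; exact isUnit_one
  set SC := S.map (fun a => (a : ℂ)) with hSC
  set SC' := S⁻¹.map (fun a => (a : ℂ)) with hSC'
  have h1 : SC * SC' = 1 := by
    rw [hSC, hSC', ← map_intCast_mul, Matrix.mul_nonsing_inv S hunit, map_intCast_one]
  have hpp (a b : ℕ) : SC ^ (a + b) * SC' ^ b = SC ^ a := by
    rw [pow_add, mul_assoc]
    have hc : Commute SC SC' := by
      have h2 : SC' * SC = 1 := by
        rw [hSC, hSC', ← map_intCast_mul, Matrix.nonsing_inv_mul S hunit, map_intCast_one]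
      exact h1.trans h2.symm
    rw [← hc.mul_pow, h1, one_pow, mul_one]
  set q := pairing S k n (u i) with hq
  have hq0 : q ≠ 0 := by
    intro h; rw [h, norm_zero] at hi; linarith
  set y : Fin d → ℂ := (SC' ^ (p - n)).mulVec (u i) with hy
  set ζ : ℂ := (2 * q)⁻¹ with hζ
  have hζ1 : ‖ζ‖ ≤ 1 := by
    rw [hζ, norm_inv, norm_mul]
    refine inv_le_one_of_one_le₀ ?_
    simp; linarith
  have hre (M : Matrix (Fin d) (Fin d) ℤ) (x : Fin d → ℂ) (a : Fin d) :
      ((M.map (fun a => (a : ℝ))).mulVec (fun b => (x b).re)) a =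
        ((M.map (fun a => (a : ℂ))).mulVec x a).re := by
    simp [Matrix.mulVec, dotProduct]
  refine ⟨fun a => (ζ * y a).re, ?_, fun j a => ?_⟩
  · have e : ∑ a, ((Matrix.vecMul k (S ^ p) a : ℤ) : ℝ) * (ζ * y a).re =
        (ζ * ∑ a, ((Matrix.vecMul k (S ^ p) a : ℤ) : ℂ) * y a).re := by
      rw [Finset.mul_sum, Complex.re_sum]
      refine Finset.sum_congr rfl fun a _ => ?_
      rw [mul_left_comm, ← Complex.ofReal_intCast, Complex.re_ofReal_mul]
    have e2 : ∑ a, ((Matrix.vecMul k (S ^ p) a : ℤ) : ℂ) * y a = q := by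
      have e3 : (fun a => ((Matrix.vecMul k (S ^ p) a : ℤ) : ℂ)) =
          Matrix.vecMul (fun i => (k i : ℂ)) (SC ^ p) := by
        ext a
        rw [hSC, ← map_intCast_pow]
        simp [Matrix.vecMul, dotProduct]
      change (fun a => ((Matrix.vecMul k (S ^ p) a : ℤ) : ℂ)) ⬝ᵥ y = q
      rw [e3, ← Matrix.dotProduct_mulVec, hy, Matrix.mulVec_mulVec, hq, pairing, ← hSC]
      conv_lhs => rw [show p = n + (p - n) by omega]
      rw [show n + (p - n) - n = p - n by omega, hpp]
    rw [e, e2, hζ, mul_inv, mul_assoc, inv_mul_cancel₀ hq0]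
    simp
  · rw [hre (S⁻¹ ^ j) (fun a => ζ * y a) a, map_intCast_pow, ← hSC']
    refine (Complex.abs_re_le_norm _).trans ?_
    have e : (SC' ^ j).mulVec (fun a => ζ * y a) a =
        ζ * (SC' ^ (j + (p - n))).mulVec (u i) a := by
      rw [pow_add, ← Matrix.mulVec_mulVec, ← hy]
      change (SC' ^ j).mulVec (ζ • y) a = _
      rw [Matrix.mulVec_smul]; rfl
    rw [e, norm_mul]
    calc ‖ζ‖ * ‖(SC' ^ (j + (p - n))).mulVec (u i) a‖
        ≤ 1 * (C * θ ^ (j + (p - n))) :=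
          mul_le_mul hζ1 ((norm_le_pi_norm _ a).trans (hu i _)) (norm_nonneg _) zero_le_one
      _ ≤ C * θ ^ (p - κ * (J + 1)) := by
        rw [one_mul]
        gcongr C * ?_
        exact pow_le_pow_of_le_one hθ0.le hθ1.le (by omega)

end Diophantine

section Torus

open UnitAddTorus

variable {d : ℕ}

lemma torusAut_add (A : Matrix (Fin d) (Fin d) ℤ) (x y : Torus d) :
    torusAut A (x + y) = torusAut A x + torusAut A y := by
  ext i
  simp [torusAut, smul_add, Finset.sum_add_distrib]

lemma torusAut_sub (A : Matrix (Fin d) (Fin d) ℤ) (x y : Torus d) :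
    torusAut A (x - y) = torusAut A x - torusAut A y := by
  ext i
  simp [torusAut, smul_sub, Finset.sum_sub_distrib]

lemma torusAut_one (x : Torus d) : torusAut (1 : Matrix (Fin d) (Fin d) ℤ) x = x := by
  ext i
  simp [torusAut, Matrix.one_apply]

lemma torusAut_mul (A B : Matrix (Fin d) (Fin d) ℤ) (x : Torus d) :
    torusAut (A * B) x = torusAut A (torusAut B x) := by
  ext i
  simp only [torusAut, Matrix.mul_apply, Finset.sum_smul, Finset.smul_sum, mul_smul]
  exact Finset.sum_comm

lemma continuous_torusAut (A : Matrix (Fin d) (Fin d) ℤ) : Continuous (torusAut A) := by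
  unfold torusAut
  fun_prop

lemma iterate_torusAut (A : Matrix (Fin d) (Fin d) ℤ) (n : ℕ) (x : Torus d) :
    (torusAut A)^[n] x = torusAut (A ^ n) x := by
  induction n with
  | zero => simp [torusAut_one]
  | succ n ih => rw [Function.iterate_succ_apply', ih, ← torusAut_mul, pow_succ']

lemma titer_torusAut {S : Matrix (Fin d) (Fin d) ℤ} (k : ℤ) (x : Torus d) :
    Titer (torusAut S) (torusAut S⁻¹) k x = torusAut (S ^ k) x := by
  cases k with
  | ofNat n => simp [Titer, iterate_torusAut]
  | negSucc n => simp only [Titer, iterate_torusAut, zpow_negSucc, Matrix.inv_pow']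

lemma torusAut_zpow_add {S : Matrix (Fin d) (Fin d) ℤ} (hdet : S.det = 1) (j k : ℤ) (x : Torus d) :
    torusAut (S ^ (j + k)) x = torusAut (S ^ j) (torusAut (S ^ k) x) := by
  rw [Matrix.zpow_add (by rw [hdet]; exact isUnit_one), torusAut_mul]

lemma measurePreserving_torusAut {S : Matrix (Fin d) (Fin d) ℤ} (hdet : S.det = 1) (k : ℤ) :
    MeasurePreserving (torusAut (S ^ k)) (volume : Measure (Torus d)) volume := by
  let F : Torus d →+ Torus d := AddMonoidHom.mk' (torusAut (S ^ k)) (torusAut_add _)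
  refine AddMonoidHom.measurePreserving (f := F) (continuous_torusAut _) (fun y => ?_) rfl
  refine ⟨torusAut (S ^ (-k)) y, ?_⟩
  change torusAut (S ^ k) (torusAut (S ^ (-k)) y) = y
  rw [← torusAut_zpow_add hdet, add_neg_cancel, zpow_zero, torusAut_one]

lemma norm_torusAut_le (A : Matrix (Fin d) (Fin d) ℤ) (x : Torus d) :
    ‖torusAut A x‖ ≤ (∑ i, ∑ j, |(A i j : ℝ)|) * ‖x‖ := by
  have hnn : ∀ i, 0 ≤ ∑ j, |(A i j : ℝ)| := fun i => Finset.sum_nonneg fun _ _ => abs_nonneg _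
  refine (pi_norm_le_iff_of_nonneg
    (mul_nonneg (Finset.sum_nonneg fun i _ => hnn i) (norm_nonneg _))).2 fun i => ?_
  calc ‖∑ j, A i j • x j‖ ≤ ∑ j, |(A i j : ℝ)| * ‖x‖ := by
        refine (norm_sum_le _ _).trans (Finset.sum_le_sum fun j _ => ?_)
        refine (norm_zsmul_le _ _).trans ?_
        rw [Int.norm_eq_abs]
        gcongr
        exact norm_le_pi_norm x j
    _ = (∑ j, |(A i j : ℝ)|) * ‖x‖ := by rw [Finset.sum_mul]
    _ ≤ _ := by
        refine mul_le_mul_of_nonneg_right ?_ (norm_nonneg _)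
        exact Finset.single_le_sum (f := fun i => ∑ j, |(A i j : ℝ)|) (fun i _ => hnn i)
          (Finset.mem_univ i)

/-- The projection of a real vector to the torus. -/
def toTorus (v : Fin d → ℝ) : Torus d := fun i => (v i : AddCircle (1 : ℝ))

lemma torusAut_toTorus (A : Matrix (Fin d) (Fin d) ℤ) (v : Fin d → ℝ) :
    torusAut A (toTorus v) = toTorus ((A.map (fun a => (a : ℝ))).mulVec v) := by
  ext i
  simp only [torusAut, toTorus, Matrix.mulVec, dotProduct, Matrix.map_apply]
  rw [← QuotientAddGroup.mk'_apply, map_sum]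
  refine Finset.sum_congr rfl fun j _ => ?_
  rw [← zsmul_eq_mul, map_zsmul]
  rfl

lemma norm_toTorus_le {v : Fin d → ℝ} {r : ℝ} (hr : 0 ≤ r) (hv : ∀ i, |v i| ≤ r) :
    ‖toTorus v‖ ≤ r :=
  (pi_norm_le_iff_of_nonneg hr).2 fun i => (QuotientAddGroup.norm_mk_le_norm).trans (hv i)

lemma mFourier_torusAut (A : Matrix (Fin d) (Fin d) ℤ) (k : Fin d → ℤ) (x : Torus d) :
    mFourier k (torusAut A x) = mFourier (Matrix.vecMul k A) x := by
  have hs {ι : Type} (s : Finset ι) (g : ι → AddCircle (1 : ℝ)) (n : ℤ) :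
      fourier n (∑ i ∈ s, g i) = ∏ i ∈ s, (fourier n (g i) : ℂ) := by
    classical
    induction s using Finset.induction_on with
    | empty => simp
    | insert a s ha ih =>
      rw [Finset.sum_insert ha, Finset.prod_insert ha, ← ih]
      simp [fourier_apply, smul_add, AddCircle.toCircle_add]
  have hs' {ι : Type} (s : Finset ι) (g : ι → ℤ) (x : AddCircle (1 : ℝ)) :
      fourier (∑ i ∈ s, g i) x = ∏ i ∈ s, (fourier (g i) x : ℂ) := by
    classical
    induction s using Finset.induction_on with
    | empty => simp
    | insert a s ha ih =>
      rw [Finset.sum_insert ha, Finset.prod_insert ha, ← ih, fourier_add]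
  simp only [mFourier, torusAut, ContinuousMap.coe_mk, hs, Matrix.vecMul, dotProduct, hs']
  rw [Finset.prod_comm]
  refine Finset.prod_congr rfl fun j _ => Finset.prod_congr rfl fun i _ => ?_
  simp [fourier_apply, mul_smul]

lemma mFourier_apply_add (k : Fin d → ℤ) (x y : Torus d) :
    mFourier k (x + y) = mFourier k x * mFourier k y := by
  simp only [mFourier, ContinuousMap.coe_mk, ← Finset.prod_mul_distrib]
  refine Finset.prod_congr rfl fun i _ => ?_
  simp [fourier_apply, smul_add, AddCircle.toCircle_add]

lemma mFourier_toTorus (k : Fin d → ℤ) (v : Fin d → ℝ) :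
    mFourier k (toTorus v) = Complex.exp (2 * Real.pi * Complex.I * (∑ i, (k i : ℝ) * v i : ℝ)) := by
  simp only [mFourier, ContinuousMap.coe_mk, toTorus, fourier_coe_apply]
  rw [← Complex.exp_sum]
  push_cast
  rw [Finset.mul_sum]
  congr 1
  refine Finset.sum_congr rfl fun i _ => ?_
  ring

lemma mFourier_toTorus_eq_neg_one {k : Fin d → ℤ} {v : Fin d → ℝ}
    (h : ∑ i, (k i : ℝ) * v i = 1 / 2) : mFourier k (toTorus v) = -1 := by
  rw [mFourier_toTorus, h, ← Complex.exp_pi_mul_I]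
  congr 1
  push_cast
  ring

lemma norm_mFourier_apply (k : Fin d → ℤ) (x : Torus d) : ‖mFourier k x‖ = 1 := by
  simp only [mFourier, fourier_apply, ContinuousMap.coe_mk, norm_prod, Circle.norm_coe,
    Finset.prod_const_one]

instance isProbabilityMeasure_volume : IsProbabilityMeasure (volume : Measure (Torus d)) := by
  have : IsProbabilityMeasure (volume : Measure (AddCircle (1 : ℝ))) := ⟨by simp⟩
  infer_instance

/-- A function which is almost invariant under a translation on which the character of index `k`
equals `-1` has a small Fourier coefficient of index `k`. -/
lemma norm_integral_mul_mFourier_le {k : Fin d → ℤ} {v : Torus d} (hv : mFourier k v = -1)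
    {G : Torus d → ℂ} (hG : Continuous G) {δ : ℝ} (hδ : ∀ x, ‖G x - G (x + v)‖ ≤ δ) :
    ‖∫ x, G x * mFourier k x‖ ≤ δ := by
  have h1 : ∫ x, G x * mFourier k x = -∫ x, G (x + v) * mFourier k x := by
    rw [← integral_add_right_eq_self (fun x => G x * mFourier k x) v, ← integral_neg]
    refine integral_congr_ae (Eventually.of_forall fun x => ?_)
    simp only [mFourier_apply_add, hv]
    ring
  have hintble (w : Torus d) : Integrable (fun x => G (x + w) * mFourier k x) :=
    (by fun_prop : Continuous _).integrable_of_hasCompactSupport (HasCompactSupport.of_compactSpace _)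
  have h2 : 2 * ∫ x, G x * mFourier k x = ∫ x, (G x - G (x + v)) * mFourier k x := by
    simp_rw [sub_mul]
    rw [integral_sub (by simpa using hintble 0) (hintble v), two_mul]
    conv_lhs => rw [h1]
    rw [← h1, sub_eq_add_neg, ← h1]
  have h3 : ‖∫ x, (G x - G (x + v)) * mFourier k x‖ ≤ δ := by
    refine (norm_integral_le_of_norm_le_const (C := δ) (Eventually.of_forall fun x => ?_)).trans ?_
    · rw [norm_mul, norm_mFourier_apply, mul_one]; exact hδ x
    · simp
  rw [← h2, norm_mul] at h3
  simp only [Complex.norm_ofNat] at h3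
  linarith [norm_nonneg (∫ x, G x * mFourier k x)]

lemma integral_mFourier_eq_zero {k : Fin d → ℤ} (hk : k ≠ 0) :
    ∫ x : Torus d, mFourier k x = 0 := by
  obtain ⟨i, hi⟩ := Function.ne_iff.1 hk
  have hi' : (k i : ℝ) ≠ 0 := by exact_mod_cast hi
  have hv : mFourier k (toTorus (Pi.single i (1 / (2 * (k i : ℝ))))) = -1 := by
    refine mFourier_toTorus_eq_neg_one ?_
    rw [Finset.sum_eq_single i (fun j _ hj => by simp [hj]) (by simp)]
    simp only [Pi.single_eq_same]
    field_simp
  have := norm_integral_mul_mFourier_le hv (G := fun _ => 1) continuous_const (δ := 0) (by simp)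
  simpa using this

lemma volume_eq_pi_haarAddCircle :
    (volume : Measure (Torus d)) = Measure.pi (fun _ => AddCircle.haarAddCircle) := by
  rw [volume_pi]
  congr 1
  ext1 _
  rw [AddCircle.volume_eq_smul_haarAddCircle, ENNReal.ofReal_one, one_smul]

/-- Parseval's identity for continuous functions on the torus. -/
lemma hasSum_sq_norm_coeff {H : Torus d → ℂ} (hH : Continuous H) :
    HasSum (fun k : Fin d → ℤ => ‖∫ x, mFourier (-k) x * H x‖ ^ 2) (∫ x, ‖H x‖ ^ 2) := by
  rw [volume_eq_pi_haarAddCircle]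
  let F : C(UnitAddTorus (Fin d), ℂ) := ⟨H, hH⟩
  have h := hasSum_sq_mFourierCoeff (F.toLp 2 (Measure.pi fun _ => AddCircle.haarAddCircle) ℂ)
  have h1 (k : Fin d → ℤ) : mFourierCoeff
      (F.toLp 2 (Measure.pi fun _ => AddCircle.haarAddCircle) ℂ) k =
      ∫ x, mFourier (-k) x * H x ∂(Measure.pi (fun _ => AddCircle.haarAddCircle)) :=
    mFourierCoeff_toLp F k
  simp only [h1] at h
  have h2 : ∫ x, ‖F.toLp 2 (Measure.pi fun _ => AddCircle.haarAddCircle) ℂ x‖ ^ 2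
      ∂(Measure.pi fun _ => AddCircle.haarAddCircle) =
      ∫ x, ‖H x‖ ^ 2 ∂(Measure.pi fun _ => AddCircle.haarAddCircle) := by
    refine integral_congr_ae ?_
    filter_upwards [F.coeFn_toLp (p := 2) (𝕜 := ℂ) (Measure.pi fun _ => AddCircle.haarAddCircle)]
      with x hx
    rw [hx]
    rfl
  rw [← h2]
  exact h

end Torus

section Approximation

open UnitAddTorus

variable {d : ℕ}

/-- `G` is `η`-Hölder with constant `K` for the sup norm on the torus. -/
def HolderBound (η K : ℝ) (G : Torus d → ℂ) : Prop :=
  ∀ x y, ‖G x - G y‖ ≤ K * ‖x - y‖ ^ η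

lemma HolderBound.continuous {η K : ℝ} (hη : 0 < η) {G : Torus d → ℂ} (hG : HolderBound η K G) :
    Continuous G := by
  rw [continuous_iff_continuousAt]
  intro x
  rw [ContinuousAt, tendsto_iff_norm_sub_tendsto_zero]
  have h : Continuous fun y : Torus d => K * ‖y - x‖ ^ η :=
    continuous_const.mul ((by fun_prop : Continuous fun y : Torus d => ‖y - x‖).rpow_const
      fun _ => Or.inr hη.le)
  have h0 := h.tendsto x
  simp only [sub_self, norm_zero, Real.zero_rpow hη.ne', mul_zero] at h0
  exact squeeze_zero (fun _ => norm_nonneg _) (fun y => hG y x) h0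

lemma _root_.Continuous.integrable_torus {E : Type*} [NormedAddCommGroup E] {G : Torus d → E}
    (hG : Continuous G) : Integrable G volume :=
  hG.integrable_of_hasCompactSupport (HasCompactSupport.of_compactSpace _)

lemma coeff_translate_sub {H : Torus d → ℂ} (hH : Continuous H) (w : Torus d) (k : Fin d → ℤ) :
    ∫ x, mFourier (-k) x * (H (x + w) - H x) =
      (mFourier k w - 1) * ∫ x, mFourier (-k) x * H x := by
  have h1 : ∫ x, mFourier (-k) x * H (x + w) = mFourier k w * ∫ x, mFourier (-k) x * H x := by
    rw [← integral_add_right_eq_self (fun x => mFourier (-k) x * H x) w, ← integral_const_mul]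
    refine integral_congr_ae (Eventually.of_forall fun x => ?_)
    have : mFourier k w * mFourier (-k) w = 1 := by
      rw [← mFourier_add, add_neg_cancel, mFourier_zero]; rfl
    simp only [mFourier_apply_add]
    linear_combination (-(mFourier (-k) x * H (x + w))) * this
  simp_rw [mul_sub]
  rw [integral_sub (by fun_prop : Continuous _).integrable_torus
    (by fun_prop : Continuous _).integrable_torus, h1, sub_mul, one_mul]

lemma sum_coeff_translate_le {η K : ℝ} (hη : 0 < η) {H : Torus d → ℂ} (hH : HolderBound η K H)
    (w : Torus d) (F : Finset (Fin d → ℤ)) :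
    ∑ k ∈ F, ‖mFourier k w - 1‖ ^ 2 * ‖∫ x, mFourier (-k) x * H x‖ ^ 2 ≤ (K * ‖w‖ ^ η) ^ 2 := by
  have hc := hH.continuous hη
  have h := hasSum_sq_norm_coeff (H := fun x => H (x + w) - H x) (by fun_prop)
  simp only [coeff_translate_sub hc, norm_mul, mul_pow] at h
  refine (sum_le_hasSum F (fun _ _ => by positivity) h).trans ?_
  refine (integral_mono (by fun_prop : Continuous _).integrable_torus
    (integrable_const ((K * ‖w‖ ^ η) ^ 2)) fun x => ?_).trans (by simp [mul_pow])
  have := hH (x + w) x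
  rw [add_sub_cancel_left] at this
  exact pow_le_pow_left₀ (norm_nonneg _) this 2

lemma two_le_sq_norm_exp_sub_one {t : ℝ} (h1 : 1 / 4 ≤ |t|) (h2 : |t| ≤ 1 / 2) :
    2 ≤ ‖Complex.exp (2 * Real.pi * Complex.I * t) - 1‖ ^ 2 := by
  have e : (2 * Real.pi * Complex.I * t : ℂ) = ((2 * Real.pi * t : ℝ) : ℂ) * Complex.I := by
    push_cast; ring
  rw [e, ← Complex.normSq_eq_norm_sq, Complex.normSq_apply]
  simp only [Complex.sub_re, Complex.sub_im, Complex.exp_ofReal_mul_I_re,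
    Complex.exp_ofReal_mul_I_im, Complex.one_re, Complex.one_im]
  have hc : Real.cos (2 * Real.pi * t) ≤ 0 := by
    rw [← Real.cos_abs, abs_mul, abs_of_pos (by positivity : 0 < 2 * Real.pi)]
    have := Real.pi_pos
    exact Real.cos_nonpos_of_pi_div_two_le_of_le (by nlinarith) (by nlinarith)
  nlinarith [Real.sin_sq_add_cos_sq (2 * Real.pi * t)]

lemma two_le_sq_norm_mFourier_single_sub_one (k : Fin d → ℤ) (i : Fin d) (j : ℕ)
    (h1 : 2 ^ j ≤ |k i|) (h2 : |k i| ≤ 2 ^ (j + 1)) :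
    2 ≤ ‖mFourier k (toTorus (Pi.single i ((1 / 2) ^ (j + 2)))) - 1‖ ^ 2 := by
  rw [mFourier_toTorus]
  have h1' : (2 : ℝ) ^ j ≤ |(k i : ℝ)| := by exact_mod_cast h1
  have h2' : |(k i : ℝ)| ≤ (2 : ℝ) ^ (j + 1) := by exact_mod_cast h2
  have hp : (0 : ℝ) < 2 ^ j := by positivity
  have e : |∑ a, (k a : ℝ) * (Pi.single i ((1 / 2) ^ (j + 2)) : Fin d → ℝ) a| =
      |(k i : ℝ)| / (4 * 2 ^ j) := by
    rw [Finset.sum_eq_single i (fun b _ hb => by simp [hb]) (by simp), Pi.single_eq_same, abs_mul,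
      abs_of_pos (by positivity : (0 : ℝ) < (1 / 2) ^ (j + 2)), one_div, inv_pow, pow_add]
    rw [div_eq_mul_inv]
    ring
  refine two_le_sq_norm_exp_sub_one ?_ ?_
  · rw [e, le_div_iff₀ (by positivity)]; linarith
  · rw [e, div_le_iff₀ (by positivity)]
    rw [pow_succ] at h2'
    linarith

/-- Fourier tails of Hölder functions decay geometrically along dyadic scales. -/
lemma sum_sq_coeff_le {η K : ℝ} (hη : 0 < η) {H : Torus d → ℂ} (hH : HolderBound η K H) (J : ℕ)
    (F : Finset (Fin d → ℤ)) (hF : ∀ k ∈ F, ∃ i, 2 ^ J ≤ |k i|) :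
    ∑ k ∈ F, ‖∫ x, mFourier (-k) x * H x‖ ^ 2 ≤
      d * K ^ 2 * (((1 / 2 : ℝ) ^ η) ^ J) ^ 2 / (1 - ((1 / 2 : ℝ) ^ η) ^ 2) := by
  set a : (Fin d → ℤ) → ℝ := fun k => ‖∫ x, mFourier (-k) x * H x‖ ^ 2 with ha
  set τ : ℝ := (1 / 2 : ℝ) ^ η with hτ
  have hτ0 : 0 < τ := by positivity
  have hτ1 : τ < 1 := Real.rpow_lt_one (by norm_num) (by norm_num) hη
  set w : Fin d → ℕ → Torus d := fun i j => toTorus (Pi.single i ((1 / 2) ^ (j + 2))) with hw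
  have hK : ∀ i j, K ^ 2 * (τ ^ j) ^ 2 ≥ (K * ‖w i j‖ ^ η) ^ 2 := fun i j => by
    rw [mul_pow]
    have hn : ‖w i j‖ ≤ (1 / 2) ^ j := by
      refine norm_toTorus_le (by positivity) fun b => ?_
      rcases eq_or_ne b i with rfl | hb
      · rw [Pi.single_eq_same, abs_of_pos (by positivity)]
        exact pow_le_pow_of_le_one (by norm_num) (by norm_num) (by omega)
      · rw [Pi.single_eq_of_ne hb, abs_zero]; positivity
    have : ‖w i j‖ ^ η ≤ τ ^ j := by
      calc ‖w i j‖ ^ η ≤ ((1 / 2 : ℝ) ^ j) ^ η := Real.rpow_le_rpow (norm_nonneg _) hn hη.le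
        _ = τ ^ j := by
          rw [hτ, ← Real.rpow_natCast, ← Real.rpow_natCast, ← Real.rpow_mul (by norm_num),
            ← Real.rpow_mul (by norm_num), mul_comm]
    gcongr
  have ha0 : ∀ k, 0 ≤ a k := fun k => sq_nonneg _
  have htr : ∀ i j, ∑ k ∈ F, ‖mFourier k (w i j) - 1‖ ^ 2 * a k ≤ K ^ 2 * (τ ^ 2) ^ j :=
    fun i j => (sum_coeff_translate_le hη hH (w i j) F).trans ((hK i j).trans_eq (by ring))
  clear_value a
  have hb : ∀ i j k, 0 ≤ ‖mFourier k (w i j) - 1‖ ^ 2 * a k :=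
    fun i j k => mul_nonneg (sq_nonneg _) (ha0 k)
  set J' := (F.sup fun k => Finset.univ.sup fun i => Nat.log 2 (k i).natAbs) + 1 with hJ'
  have hkey : ∀ k ∈ F, a k ≤ ∑ i, ∑ j ∈ Finset.Ico J J', ‖mFourier k (w i j) - 1‖ ^ 2 * a k := by
    intro k hk
    obtain ⟨i, hi⟩ := hF k hk
    have hpos : (0 : ℤ) < 2 ^ J := by positivity
    have hne : (k i).natAbs ≠ 0 := by
      intro h
      rw [Int.natAbs_eq_zero] at h
      rw [h, abs_zero] at hi
      omega
    have hcast : |k i| = ((k i).natAbs : ℤ) := Int.abs_eq_natAbs _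
    set j := Nat.log 2 (k i).natAbs with hj
    have hJj : J ≤ j := by
      rw [hj]
      refine Nat.le_log_of_pow_le (by norm_num) ?_
      rw [hcast] at hi
      exact_mod_cast hi
    have hjJ' : j < J' := by
      rw [hJ', Nat.lt_succ_iff]
      exact (Finset.le_sup (f := fun i => Nat.log 2 (k i).natAbs) (Finset.mem_univ i)).trans
        (Finset.le_sup (f := fun k : Fin d → ℤ =>
          Finset.univ.sup fun i => Nat.log 2 (k i).natAbs) hk)
    have h2 := two_le_sq_norm_mFourier_single_sub_one k i j
      (by rw [hcast]; exact_mod_cast Nat.pow_log_le_self 2 hne)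
      (by rw [hcast]; exact_mod_cast (Nat.lt_pow_succ_log_self (by norm_num) _).le)
    calc a k ≤ ‖mFourier k (w i j) - 1‖ ^ 2 * a k := by
          change 2 ≤ ‖mFourier k (w i j) - 1‖ ^ 2 at h2
          nlinarith [ha0 k]
      _ ≤ ∑ j ∈ Finset.Ico J J', ‖mFourier k (w i j) - 1‖ ^ 2 * a k :=
        Finset.single_le_sum (f := fun j => ‖mFourier k (w i j) - 1‖ ^ 2 * a k)
          (fun j _ => hb i j k) (Finset.mem_Ico.2 ⟨hJj, hjJ'⟩)
      _ ≤ _ := Finset.single_le_sum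
          (f := fun i => ∑ j ∈ Finset.Ico J J', ‖mFourier k (w i j) - 1‖ ^ 2 * a k)
          (fun i _ => Finset.sum_nonneg fun j _ => hb i j k) (Finset.mem_univ i)
  have hq0 : 0 < 1 - τ ^ 2 := by nlinarith
  calc ∑ k ∈ F, a k ≤ ∑ k ∈ F, ∑ i, ∑ j ∈ Finset.Ico J J', ‖mFourier k (w i j) - 1‖ ^ 2 * a k :=
        Finset.sum_le_sum hkey
    _ = ∑ i, ∑ j ∈ Finset.Ico J J', ∑ k ∈ F, ‖mFourier k (w i j) - 1‖ ^ 2 * a k := by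
        rw [Finset.sum_comm]
        exact Finset.sum_congr rfl fun i _ => Finset.sum_comm
    _ ≤ ∑ _i : Fin d, ∑ j ∈ Finset.Ico J J', K ^ 2 * (τ ^ 2) ^ j := by
        exact Finset.sum_le_sum fun i _ => Finset.sum_le_sum fun j _ => htr i j
    _ = d * (K ^ 2 * ∑ j ∈ Finset.Ico J J', (τ ^ 2) ^ j) := by
        simp [Finset.mul_sum]
    _ ≤ d * (K ^ 2 * ((τ ^ 2) ^ J / (1 - τ ^ 2))) := by
        gcongr
        exact geom_sum_Ico_le_of_lt_one (by positivity) (by nlinarith)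
    _ = _ := by ring

/-- The box of integer vectors with entries of absolute value at most `2 ^ J`. -/
def freqBox (d J : ℕ) : Finset (Fin d → ℤ) :=
  Fintype.piFinset fun _ => Finset.Icc (-2 ^ J) (2 ^ J)

lemma mem_freqBox {J : ℕ} {k : Fin d → ℤ} : k ∈ freqBox d J ↔ ∀ i, |k i| ≤ 2 ^ J := by
  simp [freqBox, Fintype.mem_piFinset, abs_le]

lemma integral_mFourier_neg_mul (k l : Fin d → ℤ) :
    ∫ x : Torus d, mFourier (-k) x * mFourier l x = if l = k then 1 else 0 := by
  simp_rw [← mFourier_add]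
  split_ifs with h
  · subst h
    rw [neg_add_cancel, mFourier_zero]
    simp
  · exact integral_mFourier_eq_zero (by rwa [ne_eq, neg_add_eq_zero, eq_comm])

/-- The Fourier partial sum of `H` over the box of size `2 ^ J`. -/
def partialFourier (H : Torus d → ℂ) (J : ℕ) (x : Torus d) : ℂ :=
  ∑ l ∈ freqBox d J, (∫ y, mFourier (-l) y * H y) * mFourier l x

lemma continuous_partialFourier (H : Torus d → ℂ) (J : ℕ) : Continuous (partialFourier H J) := by
  unfold partialFourier
  fun_prop

lemma coeff_sub_partialFourier {H : Torus d → ℂ} (hH : Continuous H) (J : ℕ) (k : Fin d → ℤ) :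
    ∫ x, mFourier (-k) x * (H x - partialFourier H J x) =
      if k ∈ freqBox d J then 0 else ∫ x, mFourier (-k) x * H x := by
  have hp := continuous_partialFourier H J
  simp_rw [mul_sub]
  rw [integral_sub (by fun_prop : Continuous _).integrable_torus
    (by fun_prop : Continuous _).integrable_torus]
  have : ∫ x, mFourier (-k) x * partialFourier H J x =
      if k ∈ freqBox d J then ∫ x, mFourier (-k) x * H x else 0 := by
    simp_rw [partialFourier, Finset.mul_sum, mul_left_comm (mFourier (-k) _)]
    rw [integral_finsetSum _ fun l _ => (by fun_prop : Continuous _).integrable_torus]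
    simp_rw [integral_const_mul, integral_mFourier_neg_mul]
    simp
  rw [this]
  split_ifs <;> simp

lemma integral_le_of_integral_sq_le {g : Torus d → ℝ} (hg : Continuous g) {ε : ℝ} (hε : 0 < ε)
    (h : ∫ x, g x ^ 2 ≤ ε ^ 2) : ∫ x, g x ≤ ε := by
  have h1 : ∫ x, g x ≤ ∫ x, ((2 * ε)⁻¹ * g x ^ 2 + ε / 2) := by
    refine integral_mono hg.integrable_torus (by fun_prop : Continuous _).integrable_torus
      fun x => ?_
    have e : (2 * ε)⁻¹ * g x ^ 2 + ε / 2 - g x = (g x - ε) ^ 2 / (2 * ε) := by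
      field_simp; ring
    have : 0 ≤ (g x - ε) ^ 2 / (2 * ε) := by positivity
    change g x ≤ (2 * ε)⁻¹ * g x ^ 2 + ε / 2
    linarith
  rw [integral_add (by fun_prop : Continuous _).integrable_torus (integrable_const _),
    integral_const_mul] at h1
  have h2 : (2 * ε)⁻¹ * ∫ x, g x ^ 2 ≤ (2 * ε)⁻¹ * ε ^ 2 := by gcongr
  have h3 : (2 * ε)⁻¹ * ε ^ 2 = ε / 2 := by field_simp
  simp at h1
  simp at h2
  simp at h3
  linarith

lemma exists_integral_sub_partialFourier_le (d : ℕ) {η : ℝ} (hη : 0 < η) :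
    ∃ D : ℝ, 0 < D ∧ ∀ (K : ℝ) (H : Torus d → ℂ), 0 ≤ K → HolderBound η K H → ∀ J : ℕ,
      ∫ x, ‖H x - partialFourier H J x‖ ≤ D * (1 + K) * ((1 / 2 : ℝ) ^ η) ^ J := by
  set τ : ℝ := (1 / 2 : ℝ) ^ η with hτ
  have hτ0 : 0 < τ := by positivity
  have hτ1 : τ < 1 := Real.rpow_lt_one (by norm_num) (by norm_num) hη
  have hq0 : 0 < 1 - τ ^ 2 := by nlinarith
  refine ⟨1 + d / (1 - τ ^ 2), by positivity, fun K H hK hH J => ?_⟩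
  have hc := hH.continuous hη
  have hp := continuous_partialFourier H J
  refine integral_le_of_integral_sq_le (by fun_prop) (by positivity) ?_
  refine hasSum_le_of_sum_le (hasSum_sq_norm_coeff (H := fun x => H x - partialFourier H J x)
    (by fun_prop)) fun F => ?_
  simp only [coeff_sub_partialFourier hc]
  have h1 : ∑ k ∈ F, ‖if k ∈ freqBox d J then 0 else ∫ x, mFourier (-k) x * H x‖ ^ 2 =
      ∑ k ∈ F with k ∉ freqBox d J, ‖∫ x, mFourier (-k) x * H x‖ ^ 2 := by
    rw [Finset.sum_filter]
    refine Finset.sum_congr rfl fun k _ => ?_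
    split_ifs <;> simp
  rw [h1]
  refine (sum_sq_coeff_le hη hH J _ fun k hk => ?_).trans ?_
  · have := (Finset.mem_filter.1 hk).2
    rw [mem_freqBox] at this
    push Not at this
    exact this.imp fun i hi => hi.le
  · have h2 : d / (1 - τ ^ 2) ≤ (1 + d / (1 - τ ^ 2)) ^ 2 := by
      nlinarith [show 0 ≤ d / (1 - τ ^ 2) by positivity]
    calc d * K ^ 2 * (τ ^ J) ^ 2 / (1 - τ ^ 2) = d / (1 - τ ^ 2) * K ^ 2 * (τ ^ J) ^ 2 := by ring
      _ ≤ (1 + d / (1 - τ ^ 2)) ^ 2 * (1 + K) ^ 2 * (τ ^ J) ^ 2 := by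
        gcongr
        linarith
      _ = _ := by ring

end Approximation

section Decorrelation

open UnitAddTorus

variable {d : ℕ}

/-- Regularity of `G` along displacements that stay small under all negative iterates of `S`. -/
def UnstableRegular (S : Matrix (Fin d) (Fin d) ℤ) (η K : ℝ) (G : Torus d → ℂ) : Prop :=
  ∀ (v : Fin d → ℝ) (δ : ℝ), 0 ≤ δ →
    (∀ (j : ℕ) (i : Fin d), |((S⁻¹ ^ j).map (fun a => (a : ℝ))).mulVec v i| ≤ δ) →
    ∀ x, ‖G x - G (x + toTorus v)‖ ≤ K * δ ^ η

lemma norm_integral_le_one {Ω : Type*} [MeasurableSpace Ω] {μ : Measure Ω} [IsProbabilityMeasure μ]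
    {F : Ω → ℂ} (hF : ∀ x, ‖F x‖ ≤ 1) : ‖∫ x, F x ∂μ‖ ≤ 1 := by
  simpa using norm_integral_le_of_norm_le_const (μ := μ) (Eventually.of_forall hF)

lemma card_freqBox_le (d J : ℕ) : ((freqBox d J).card : ℝ) ≤ 4 ^ d * (2 ^ d) ^ J := by
  have h : ((freqBox d J).card : ℝ) = (2 * 2 ^ J + 1) ^ d := by
    rw [freqBox, Fintype.card_piFinset]
    simp only [Int.card_Icc, Finset.prod_const, Finset.card_univ, Fintype.card_fin]
    have : ((2 : ℤ) ^ J + 1 - -2 ^ J).toNat = 2 * 2 ^ J + 1 := by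
      have : (2 : ℤ) ^ J + 1 - -2 ^ J = ((2 * 2 ^ J + 1 : ℕ) : ℤ) := by push_cast; ring
      rw [this, Int.toNat_natCast]
    rw [this]
    push_cast
    rfl
  have h1 : (1 : ℝ) ≤ 2 ^ J := one_le_pow₀ (by norm_num)
  rw [h, pow_right_comm, ← mul_pow]
  gcongr
  linarith

lemma integral_comp_torusAut {S : Matrix (Fin d) (Fin d) ℤ} (hdet : S.det = 1) (k : ℤ)
    {E : Type*} [NormedAddCommGroup E] [NormedSpace ℝ E] {F : Torus d → E} (hF : Continuous F) :
    ∫ x, F (torusAut (S ^ k) x) = ∫ x, F x := by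
  have hmp := measurePreserving_torusAut hdet k
  conv_rhs => rw [← hmp.map_eq]
  rw [integral_map hmp.aemeasurable (by rw [hmp.map_eq]; exact hF.aestronglyMeasurable)]

lemma norm_integral_mul_comp_le {S : Matrix (Fin d) (Fin d) ℤ} (hdet : S.det = 1) (p : ℕ)
    {G F : Torus d → ℂ} (hG1 : ∀ x, ‖G x‖ ≤ 1) (hF : Continuous F) :
    ‖∫ x, G x * F (torusAut (S ^ p) x)‖ ≤ ∫ x, ‖F x‖ := by
  have hc := continuous_torusAut (S ^ p)
  have h := integral_comp_torusAut hdet p hF.norm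
  rw [zpow_natCast] at h
  rw [← h]
  refine norm_integral_le_of_norm_le (by fun_prop : Continuous _).integrable_torus
    (Eventually.of_forall fun x => ?_)
  rw [norm_mul]
  exact mul_le_of_le_one_left (norm_nonneg _) (hG1 x)

/-- Decorrelation with a trigonometric polynomial. -/
lemma norm_integral_mul_partialFourier_le {S : Matrix (Fin d) (Fin d) ℤ} {G H : Torus d → ℂ}
    (hG : Continuous G) (hH : ∀ x, ‖H x‖ ≤ 1) (J p : ℕ) {ε : ℝ}
    (hε : ∀ k ∈ freqBox d J, k ≠ 0 → ‖∫ x, G x * mFourier (Matrix.vecMul k (S ^ p)) x‖ ≤ ε)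
    (hε0 : 0 ≤ ε) :
    ‖(∫ x, G x * partialFourier H J (torusAut (S ^ p) x)) - (∫ x, G x) * ∫ x, partialFourier H J x‖
      ≤ (freqBox d J).card * ε := by
  have h1 : ∫ x, G x * partialFourier H J (torusAut (S ^ p) x) = ∑ l ∈ freqBox d J,
      (∫ y, mFourier (-l) y * H y) * ∫ x, G x * mFourier (Matrix.vecMul l (S ^ p)) x := by
    simp_rw [partialFourier, mFourier_torusAut, Finset.mul_sum, mul_left_comm (G _)]
    rw [integral_finsetSum _ fun l _ => (by fun_prop : Continuous _).integrable_torus]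
    simp_rw [integral_const_mul]
  have h2 : ∫ x, partialFourier H J x = ∑ l ∈ freqBox d J,
      (∫ y, mFourier (-l) y * H y) * ∫ x, mFourier l x := by
    simp_rw [partialFourier]
    rw [integral_finsetSum _ fun l _ => (by fun_prop : Continuous _).integrable_torus]
    simp_rw [integral_const_mul]
  rw [h1, h2, Finset.mul_sum, ← Finset.sum_sub_distrib]
  refine (norm_sum_le _ _).trans ?_
  rw [← nsmul_eq_mul]
  refine Finset.sum_le_card_nsmul _ _ _ fun l hl => ?_
  rcases eq_or_ne l 0 with rfl | hl0
  · rw [Matrix.zero_vecMul, mFourier_zero]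
    simp only [ContinuousMap.one_apply, mul_one, integral_const]
    simp [mul_comm, hε0]
  · rw [integral_mFourier_eq_zero hl0, mul_zero, mul_zero, sub_zero, norm_mul]
    refine (mul_le_of_le_one_left (norm_nonneg _) (norm_integral_le_one fun x => ?_)).trans
      (hε l hl hl0)
    rw [norm_mul, norm_mFourier_apply, one_mul]
    exact hH x

lemma exists_decorrelation_scale (hd : 0 < d) {S : Matrix (Fin d) (Fin d) ℤ}
    (hdet : S.det = 1) (hEig : NoRootOfUnityEigenvalue S) {η : ℝ} (hη : 0 < η) :
    ∃ (C τ : ℝ) (Q : ℕ), 0 ≤ C ∧ 0 < τ ∧ τ < 1 ∧ 0 < Q ∧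
      ∀ (G H : Torus d → ℂ) (K L : ℝ), 0 ≤ K → 0 ≤ L → Continuous G → (∀ x, ‖G x‖ ≤ 1) →
        (∀ x, ‖H x‖ ≤ 1) → UnstableRegular S η K G → HolderBound η L H →
        ∀ J p : ℕ, Q * (J + 1) ≤ p →
          ‖(∫ x, G x * H (torusAut (S ^ p) x)) - (∫ x, G x) * ∫ x, H x‖ ≤
            C * (1 + K + L) * τ ^ J := by
  obtain ⟨θ, C, κ, hθ0, hθ1, hC, hvec⟩ := exists_unstable_half_vector hd hdet hEig
  obtain ⟨D, hD, happrox⟩ := exists_integral_sub_partialFourier_le d hη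
  set τ : ℝ := (1 / 2 : ℝ) ^ η with hτ
  have hτ0 : 0 < τ := by positivity
  have hτ1 : τ < 1 := Real.rpow_lt_one (by norm_num) (by norm_num) hη
  have hθη0 : 0 < θ ^ η := by positivity
  have hθη1 : θ ^ η < 1 := Real.rpow_lt_one hθ0.le hθ1 hη
  obtain ⟨m, hm⟩ := exists_pow_lt_of_lt_one (show 0 < τ / 2 ^ d by positivity) hθη1
  refine ⟨2 * D + 4 ^ d * C ^ η, τ, κ + m + 1, by positivity, hτ0, hτ1, by omega,
    fun G H K L hK hL hGc hG1 hH1 hG hH J p hp => ?_⟩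
  have hp' : κ * (J + 1) + m * J ≤ p := by nlinarith
  have hHc := hH.continuous hη
  set P := partialFourier H J with hP
  have hPc : Continuous P := continuous_partialFourier H J
  have hTc := continuous_torusAut (S ^ p)
  have happ := happrox L H hL hH J
  set ε : ℝ := K * (C * θ ^ (p - κ * (J + 1))) ^ η with hε
  have hmid : ‖(∫ x, G x * P (torusAut (S ^ p) x)) - (∫ x, G x) * ∫ x, P x‖ ≤
      (freqBox d J).card * ε := by
    refine norm_integral_mul_partialFourier_le hGc hH1 J p (fun k hk hk0 => ?_) (by positivity)
    obtain ⟨v, hv, hvj⟩ := hvec J k hk0 (mem_freqBox.1 hk) p (by omega)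
    exact norm_integral_mul_mFourier_le (mFourier_toTorus_eq_neg_one hv) hGc
      (hG v _ (by positivity) hvj)
  have hεle : ε ≤ K * (C ^ η * (τ / 2 ^ d) ^ J) := by
    rw [hε, Real.mul_rpow hC (by positivity)]
    gcongr
    calc (θ ^ (p - κ * (J + 1))) ^ η = (θ ^ η) ^ (p - κ * (J + 1)) := by
          rw [← Real.rpow_natCast, ← Real.rpow_natCast, ← Real.rpow_mul hθ0.le,
            ← Real.rpow_mul hθ0.le, mul_comm]
      _ ≤ (θ ^ η) ^ (m * J) := pow_le_pow_of_le_one hθη0.le hθη1.le (by omega)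
      _ ≤ (τ / 2 ^ d) ^ J := by
          rw [pow_mul]
          gcongr
  have hmid' : (freqBox d J).card * ε ≤ 4 ^ d * C ^ η * K * τ ^ J := by
    calc (freqBox d J).card * ε ≤ (4 ^ d * (2 ^ d) ^ J) * (K * (C ^ η * (τ / 2 ^ d) ^ J)) :=
          mul_le_mul (card_freqBox_le d J) hεle (by positivity) (by positivity)
      _ = 4 ^ d * C ^ η * K * ((2 ^ d * (τ / 2 ^ d)) ^ J) := by rw [mul_pow]; ring
      _ = _ := by rw [mul_div_cancel₀ _ (by positivity)]
  have h1 : ‖∫ x, G x * (H (torusAut (S ^ p) x) - P (torusAut (S ^ p) x))‖ ≤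
      D * (1 + L) * τ ^ J :=
    (norm_integral_mul_comp_le hdet p hG1 (F := fun x => H x - P x) (by fun_prop)).trans happ
  have h3 : ‖(∫ x, G x) * ∫ x, (P x - H x)‖ ≤ D * (1 + L) * τ ^ J := by
    rw [norm_mul]
    refine (mul_le_of_le_one_left (norm_nonneg _) (norm_integral_le_one hG1)).trans ?_
    refine (norm_integral_le_integral_norm _).trans (le_trans (le_of_eq ?_) happ)
    simp_rw [norm_sub_rev (P _)]
    rfl
  have e : (∫ x, G x * H (torusAut (S ^ p) x)) - (∫ x, G x) * ∫ x, H x =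
      (∫ x, G x * (H (torusAut (S ^ p) x) - P (torusAut (S ^ p) x))) +
      ((∫ x, G x * P (torusAut (S ^ p) x)) - (∫ x, G x) * ∫ x, P x) +
      (∫ x, G x) * ∫ x, (P x - H x) := by
    simp_rw [mul_sub]
    rw [integral_sub (by fun_prop : Continuous _).integrable_torus
      (by fun_prop : Continuous _).integrable_torus,
      integral_sub (by fun_prop : Continuous _).integrable_torus
      (by fun_prop : Continuous _).integrable_torus]
    ring
  rw [e]
  refine (norm_add₃_le).trans ?_
  have hτJ : 0 < τ ^ J := by positivity
  calc _ ≤ D * (1 + L) * τ ^ J + 4 ^ d * C ^ η * K * τ ^ J + D * (1 + L) * τ ^ J :=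
        add_le_add (add_le_add h1 (hmid.trans hmid')) h3
    _ = (2 * D * (1 + L) + 4 ^ d * C ^ η * K) * τ ^ J := by ring
    _ ≤ (2 * D * (1 + K + L) + 4 ^ d * C ^ η * (1 + K + L)) * τ ^ J := by
        gcongr <;> linarith
    _ = _ := by ring

/-- Exponential decorrelation for ergodic toral automorphisms. -/
lemma exists_exponential_decorrelation (hd : 0 < d) {S : Matrix (Fin d) (Fin d) ℤ}
    (hdet : S.det = 1) (hEig : NoRootOfUnityEigenvalue S) {η : ℝ} (hη : 0 < η) :
    ∃ (C ρ : ℝ), 0 ≤ C ∧ 0 < ρ ∧ ρ < 1 ∧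
      ∀ (G H : Torus d → ℂ) (K L : ℝ), 0 ≤ K → 0 ≤ L → Continuous G → (∀ x, ‖G x‖ ≤ 1) →
        (∀ x, ‖H x‖ ≤ 1) → UnstableRegular S η K G → HolderBound η L H → ∀ p : ℕ,
          ‖(∫ x, G x * H (torusAut (S ^ p) x)) - (∫ x, G x) * ∫ x, H x‖ ≤
            C * (1 + K + L) * ρ ^ p := by
  obtain ⟨C, τ, Q, hC, hτ0, hτ1, hQ, h⟩ := exists_decorrelation_scale hd hdet hEig hη
  have hQ' : (0 : ℝ) < Q := by exact_mod_cast hQ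
  set ρ : ℝ := τ ^ (1 / (Q : ℝ)) with hρ
  have hρ0 : 0 < ρ := by positivity
  have hρ1 : ρ < 1 := Real.rpow_lt_one hτ0.le hτ1 (by positivity)
  have hρQ : ρ ^ Q = τ := by
    rw [hρ, ← Real.rpow_natCast, ← Real.rpow_mul hτ0.le, one_div_mul_cancel hQ'.ne', Real.rpow_one]
  have hρp (p : ℕ) : τ ^ (p / Q + 1) ≤ ρ ^ p := by
    rw [← hρQ, ← pow_mul]
    exact pow_le_pow_of_le_one hρ0.le hρ1.le (Nat.lt_mul_div_succ p hQ).le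
  refine ⟨2 / τ + C / τ ^ 2, ρ, by positivity, hρ0, hρ1,
    fun G H K L hK hL hGc hG1 hH1 hG hH p => ?_⟩
  have hp := hρp p
  rcases Nat.eq_zero_or_pos (p / Q) with hn | hn
  · rw [hn, zero_add, pow_one] at hp
    have h2 : ‖(∫ x, G x * H (torusAut (S ^ p) x)) - (∫ x, G x) * ∫ x, H x‖ ≤ 2 := by
      refine (norm_sub_le _ _).trans ?_
      have h1 := norm_integral_le_one (μ := (volume : Measure (Torus d)))
        (F := fun x => G x * H (torusAut (S ^ p) x)) fun x => by
          rw [norm_mul]; exact mul_le_one₀ (hG1 x) (norm_nonneg _) (hH1 _)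
      have h3 : ‖(∫ x, G x) * ∫ x, H x‖ ≤ 1 := by
        rw [norm_mul]
        exact mul_le_one₀ (norm_integral_le_one hG1) (norm_nonneg _) (norm_integral_le_one hH1)
      linarith
    calc _ ≤ 2 := h2
      _ = 2 / τ * 1 * τ := by field_simp
      _ ≤ (2 / τ + C / τ ^ 2) * (1 + K + L) * ρ ^ p := by
        gcongr
        · exact le_add_of_nonneg_right (by positivity)
        · linarith
  · have h1 := h G H K L hK hL hGc hG1 hH1 hG hH (p / Q - 1) p (by
      rw [Nat.sub_add_cancel hn]; exact Nat.mul_div_le p Q)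
    have h3 : τ ^ (p / Q - 1) = τ ^ (p / Q + 1) / τ ^ 2 := by
      rw [eq_div_iff (by positivity), ← pow_add]
      congr 1
      omega
    calc _ ≤ C * (1 + K + L) * τ ^ (p / Q - 1) := h1
      _ = (C / τ ^ 2) * (1 + K + L) * τ ^ (p / Q + 1) := by rw [h3]; ring
      _ ≤ (2 / τ + C / τ ^ 2) * (1 + K + L) * ρ ^ p := by
        gcongr
        exact le_add_of_nonneg_left (by positivity)

end Decorrelation

section Products

variable {d : ℕ}

lemma norm_prod_le_one {ι : Type*} (s : Finset ι) {a : ι → ℂ} (ha : ∀ i, ‖a i‖ ≤ 1) :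
    ‖∏ i ∈ s, a i‖ ≤ 1 := by
  rw [norm_prod]
  exact Finset.prod_le_one (fun _ _ => norm_nonneg _) fun i _ => ha i

lemma norm_prod_sub_prod_le {ι : Type*} (s : Finset ι) {a b : ι → ℂ} (ha : ∀ i, ‖a i‖ ≤ 1)
    (hb : ∀ i, ‖b i‖ ≤ 1) : ‖∏ i ∈ s, a i - ∏ i ∈ s, b i‖ ≤ ∑ i ∈ s, ‖a i - b i‖ := by
  classical
  induction s using Finset.induction_on with
  | empty => simp
  | insert j s hj ih =>
    rw [Finset.prod_insert hj, Finset.prod_insert hj, Finset.sum_insert hj]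
    have e : a j * ∏ i ∈ s, a i - b j * ∏ i ∈ s, b i =
        (a j - b j) * ∏ i ∈ s, a i + b j * (∏ i ∈ s, a i - ∏ i ∈ s, b i) := by ring
    rw [e]
    refine (norm_add_le _ _).trans (add_le_add ?_ ?_)
    · rw [norm_mul]
      exact mul_le_of_le_one_right (norm_nonneg _) (norm_prod_le_one s ha)
    · rw [norm_mul]
      exact (mul_le_of_le_one_left (norm_nonneg _) (hb j)).trans ih

lemma exists_norm_torusAut_pow_le (S : Matrix (Fin d) (Fin d) ℤ) :
    ∃ Λ : ℝ, 1 ≤ Λ ∧ ∀ (n : ℕ) (x : Torus d), ‖torusAut (S ^ n) x‖ ≤ Λ ^ n * ‖x‖ := by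
  refine ⟨max 1 (∑ i, ∑ j, |(S i j : ℝ)|), le_max_left _ _, fun n => ?_⟩
  induction n with
  | zero => intro x; simp [torusAut_one]
  | succ n ih =>
    intro x
    rw [pow_succ', torusAut_mul]
    calc _ ≤ (∑ i, ∑ j, |(S i j : ℝ)|) * ‖torusAut (S ^ n) x‖ := norm_torusAut_le _ _
      _ ≤ max 1 (∑ i, ∑ j, |(S i j : ℝ)|) *
          ((max 1 (∑ i, ∑ j, |(S i j : ℝ)|)) ^ n * ‖x‖) :=
        mul_le_mul (le_max_right _ _) (ih x) (norm_nonneg _) (by positivity)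
      _ = _ := by rw [pow_succ']; ring

/-- Decorrelation of products of Hölder observables along the orbit. -/
theorem exists_decorrelation_prod (hd : 0 < d) {S : Matrix (Fin d) (Fin d) ℤ}
    (hdet : S.det = 1) (hEig : NoRootOfUnityEigenvalue S) {η : ℝ} (hη : 0 < η) :
    ∃ (C Λ ρ : ℝ), 0 ≤ C ∧ 1 ≤ Λ ∧ 0 < ρ ∧ ρ < 1 ∧
      ∀ (I J : Finset ℤ) (h g : ℤ → Torus d → ℂ) (a b : ℤ → ℝ) (n : ℤ) (p s : ℕ),
        (∀ k, 0 ≤ a k) → (∀ k, 0 ≤ b k) → (∀ k x, ‖h k x‖ ≤ 1) → (∀ k x, ‖g k x‖ ≤ 1) →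
        (∀ k, HolderBound η (a k) (h k)) → (∀ k, HolderBound η (b k) (g k)) →
        (∀ k ∈ I, k ≤ n) → (∀ k ∈ J, n + p ≤ k ∧ k ≤ n + p + s) →
        ‖(∫ x, (∏ k ∈ I, h k (torusAut (S ^ k) x)) * ∏ k ∈ J, g k (torusAut (S ^ k) x)) -
          (∫ x, ∏ k ∈ I, h k (torusAut (S ^ k) x)) * ∫ x, ∏ k ∈ J, g k (torusAut (S ^ k) x)‖ ≤
          C * (1 + ∑ k ∈ I, a k + ∑ k ∈ J, b k) * Λ ^ s * ρ ^ p := by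
  obtain ⟨C, ρ, hC, hρ0, hρ1, hdec⟩ := exists_exponential_decorrelation hd hdet hEig hη
  obtain ⟨Λ, hΛ, hΛS⟩ := exists_norm_torusAut_pow_le S
  have hΛη : 1 ≤ Λ ^ η := Real.one_le_rpow hΛ hη.le
  refine ⟨C, Λ ^ η, ρ, hC, hΛη, hρ0, hρ1, fun I J h g a b n p s ha hb hh hg hha hgb hI hJ => ?_⟩
  set G : Torus d → ℂ := fun x => ∏ k ∈ I, h k (torusAut (S ^ (k - n)) x) with hG
  set H : Torus d → ℂ := fun x => ∏ k ∈ J, g k (torusAut (S ^ (k - (n + p))) x) with hH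
  have hhc (k : ℤ) : Continuous (h k) := (hha k).continuous hη
  have hgc (k : ℤ) : Continuous (g k) := (hgb k).continuous hη
  have hTc (k : ℤ) : Continuous (torusAut (S ^ k) : Torus d → Torus d) := continuous_torusAut _
  have hTc' (k : ℕ) : Continuous (torusAut (S ^ k) : Torus d → Torus d) := continuous_torusAut _
  have hGc : Continuous G := continuous_finsetProd _ fun k _ => (hhc k).comp (hTc _)
  have hHc : Continuous H := continuous_finsetProd _ fun k _ => (hgc k).comp (hTc _)
  have hΛs : 1 ≤ (Λ ^ η) ^ s := one_le_pow₀ hΛη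
  have hGr : UnstableRegular S η (∑ k ∈ I, a k) G := by
    intro v δ hδ hv x
    refine (norm_prod_sub_prod_le I (fun k => hh k _) (fun k => hh k _)).trans ?_
    rw [Finset.sum_mul]
    refine Finset.sum_le_sum fun k hk => (hha k _ _).trans ?_
    have hkn : S ^ (k - n) = S⁻¹ ^ (n - k).toNat := by
      have : k - n = -((n - k).toNat : ℤ) := by
        rw [Int.toNat_of_nonneg (by linarith [hI k hk])]; ring
      rw [this, Matrix.zpow_neg_natCast, Matrix.inv_pow']
    have hnorm : ‖torusAut (S ^ (k - n)) x - torusAut (S ^ (k - n)) (x + toTorus v)‖ ≤ δ := by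
      rw [torusAut_add, sub_add_cancel_left, norm_neg, hkn, torusAut_toTorus]
      exact norm_toTorus_le hδ (hv _)
    exact mul_le_mul_of_nonneg_left (Real.rpow_le_rpow (norm_nonneg _) hnorm hη.le) (ha k)
  have hHr : HolderBound η ((∑ k ∈ J, b k) * (Λ ^ η) ^ s) H := by
    intro x y
    refine (norm_prod_sub_prod_le J (fun k => hg k _) (fun k => hg k _)).trans ?_
    rw [Finset.sum_mul, Finset.sum_mul]
    refine Finset.sum_le_sum fun k hk => (hgb k _ _).trans ?_
    rw [mul_assoc]
    refine mul_le_mul_of_nonneg_left ?_ (hb k)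
    obtain ⟨j, hj⟩ := Int.eq_ofNat_of_zero_le (show 0 ≤ k - (n + p) by linarith [(hJ k hk).1])
    have hjs : j ≤ s := by have := (hJ k hk).2; omega
    rw [hj, zpow_natCast, ← torusAut_sub]
    have hΛ0 : 0 ≤ Λ := by linarith
    calc ‖torusAut (S ^ j) (x - y)‖ ^ η ≤ (Λ ^ s * ‖x - y‖) ^ η := by
          refine Real.rpow_le_rpow (norm_nonneg _) ((hΛS j _).trans ?_) hη.le
          gcongr
      _ = _ := by
          rw [Real.mul_rpow (by positivity) (norm_nonneg _), ← Real.rpow_natCast,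
            ← Real.rpow_natCast, ← Real.rpow_mul hΛ0, ← Real.rpow_mul hΛ0, mul_comm η]
  have hmain := hdec G H _ _ (Finset.sum_nonneg fun k _ => ha k)
    (mul_nonneg (Finset.sum_nonneg fun k _ => hb k) (by positivity)) hGc
    (fun x => norm_prod_le_one _ fun k => hh k _) (fun x => norm_prod_le_one _ fun k => hg k _)
    hGr hHr p
  have hG' (x : Torus d) : ∏ k ∈ I, h k (torusAut (S ^ k) x) = G (torusAut (S ^ n) x) := by
    simp only [hG, ← torusAut_zpow_add hdet, sub_add_cancel]
  have hH' (x : Torus d) : ∏ k ∈ J, g k (torusAut (S ^ k) x) =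
      H (torusAut (S ^ p) (torusAut (S ^ n) x)) := by
    simp only [hH, ← zpow_natCast, ← torusAut_zpow_add hdet]
    congr 1
    ext1 k
    congr 3
    ring
  have e1 : ∫ x, G (torusAut (S ^ n) x) * H (torusAut (S ^ p) (torusAut (S ^ n) x)) =
      ∫ x, G x * H (torusAut (S ^ p) x) :=
    integral_comp_torusAut hdet n (F := fun x => G x * H (torusAut (S ^ p) x))
      (hGc.mul (hHc.comp (hTc' p)))
  have e2 : ∫ x, G (torusAut (S ^ n) x) = ∫ x, G x := integral_comp_torusAut hdet n hGc
  have e3 : ∫ x, H (torusAut (S ^ p) (torusAut (S ^ n) x)) = ∫ x, H x := by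
    have := integral_comp_torusAut hdet (p + n) hHc
    simpa only [torusAut_zpow_add hdet, zpow_natCast] using this
  simp_rw [hG', hH']
  rw [e1, e2, e3]
  refine hmain.trans ?_
  have hA : 0 ≤ ∑ k ∈ I, a k := Finset.sum_nonneg fun k _ => ha k
  calc C * (1 + ∑ k ∈ I, a k + (∑ k ∈ J, b k) * (Λ ^ η) ^ s) * ρ ^ p
      ≤ C * ((1 + ∑ k ∈ I, a k + ∑ k ∈ J, b k) * (Λ ^ η) ^ s) * ρ ^ p := by
        gcongr
        nlinarith
    _ = _ := by ring

lemma HolderBound.of_isHolder {η : ℝ} (hη : 0 < η) {f : Torus d → ℝ} (hf : IsHolder η f) :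
    ∃ K : ℝ, 0 ≤ K ∧ HolderBound η K (fun x => (f x : ℂ)) := by
  obtain ⟨c, hc⟩ := hf
  refine ⟨|c| * (Real.sqrt d) ^ η, by positivity, fun x y => ?_⟩
  rw [← Complex.ofReal_sub, Complex.norm_real, Real.norm_eq_abs]
  have hdist : torusDist x y ≤ Real.sqrt d * ‖x - y‖ := by
    rw [torusDist]
    refine Real.sqrt_le_iff.2 ⟨by positivity, ?_⟩
    rw [mul_pow, Real.sq_sqrt (by positivity)]
    calc ∑ i, ‖x i - y i‖ ^ 2 ≤ ∑ _i : Fin d, ‖x - y‖ ^ 2 := by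
          gcongr with i
          exact norm_le_pi_norm (x - y) i
      _ = _ := by simp
  calc |f x - f y| ≤ c * torusDist x y ^ η := hc x y
    _ ≤ |c| * (Real.sqrt d * ‖x - y‖) ^ η := by
        have h0 : 0 ≤ torusDist x y := Real.sqrt_nonneg _
        exact mul_le_mul (le_abs_self c) (Real.rpow_le_rpow h0 hdist hη.le) (by positivity)
          (abs_nonneg c)
    _ = _ := by rw [Real.mul_rpow (by positivity) (norm_nonneg _)]; ring

lemma noRootOfUnityEigenvalue_inv {S : Matrix (Fin d) (Fin d) ℤ} (hdet : S.det = 1)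
    (hEig : NoRootOfUnityEigenvalue S) : NoRootOfUnityEigenvalue S⁻¹ := by
  intro z hz n hn hzn
  have hunit : IsUnit S.det := by rw [hdet]; exact isUnit_one
  have h1 : S.map (fun a => (a : ℂ)) * S⁻¹.map (fun a => (a : ℂ)) = 1 := by
    rw [← map_intCast_mul, Matrix.mul_nonsing_inv S hunit, map_intCast_one]
  have hz0 : z ≠ 0 := by
    rintro rfl
    rw [zero_pow hn] at hzn
    exact zero_ne_one hzn
  refine hEig z⁻¹ ?_ n hn (by rw [inv_pow, hzn, inv_one])
  rw [Polynomial.IsRoot, Matrix.eval_charpoly] at hz ⊢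
  set A := S.map (fun a => (a : ℂ)) with hA
  set B := S⁻¹.map (fun a => (a : ℂ)) with hB
  have e : Matrix.scalar (Fin d) z⁻¹ - A =
      (-(Matrix.scalar (Fin d) z⁻¹)) * (A * (Matrix.scalar (Fin d) z - B)) := by
    rw [mul_sub, h1, ← (Matrix.scalar_commute z (Commute.all z) A).eq, mul_sub, mul_one, neg_mul,
      ← mul_assoc, ← map_mul, inv_mul_cancel₀ hz0, map_one, one_mul]
    abel
  rw [e, Matrix.det_mul, Matrix.det_mul, hz, mul_zero, mul_zero]

end Products

section Scenery

variable {d : ℕ}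

/-- The `±1`-valued scenery driven by the toral automorphism `S`. -/
def scenery (S : Matrix (Fin d) (Fin d) ℤ) (f : Torus d → ℝ) (k : ℤ)
    (x : Torus d × (ℤ → ℝ)) : ℝ :=
  2 * (if x.2 k ≤ f (torusAut (S ^ k) x.1) then (1 : ℝ) else 0) - 1

/-- The expectation of `F` at a `±1`-valued variable equal to `1` with probability `f x`. -/
def siteMean (f : Torus d → ℝ) (F : ℝ → ℂ) (x : Torus d) : ℂ :=
  (f x : ℂ) * F 1 + (1 - (f x : ℂ)) * F (-1)

lemma apply_scenery (S : Matrix (Fin d) (Fin d) ℤ) (f : Torus d → ℝ) (k : ℤ) {α : Type*}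
    (F : ℝ → α) (x : Torus d × (ℤ → ℝ)) :
    F (scenery S f k x) = if x.2 k ≤ f (torusAut (S ^ k) x.1) then F 1 else F (-1) := by
  unfold scenery
  split_ifs <;> norm_num

lemma measurable_apply_scenery (S : Matrix (Fin d) (Fin d) ℤ) {f : Torus d → ℝ}
    (hf : Measurable f) (k : ℤ) {α : Type*} [MeasurableSpace α] (F : ℝ → α) :
    Measurable fun x => F (scenery S f k x) := by
  simp_rw [apply_scenery]
  refine Measurable.ite (measurableSet_le ?_ ?_) measurable_const measurable_const
  · exact (measurable_pi_apply k).comp measurable_snd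
  · exact hf.comp ((continuous_torusAut _).measurable.comp measurable_fst)

lemma norm_apply_scenery_le (S : Matrix (Fin d) (Fin d) ℤ) (f : Torus d → ℝ) (k : ℤ)
    (F : ℝ → ℂ) (x : Torus d × (ℤ → ℝ)) :
    ‖F (scenery S f k x)‖ ≤ ‖F 1‖ + ‖F (-1)‖ := by
  rw [apply_scenery S f k F]
  split_ifs <;> simp

lemma integrable_prod_scenery (S : Matrix (Fin d) (Fin d) ℤ) {f : Torus d → ℝ}
    (hf : Measurable f) {μ : Measure (Torus d × (ℤ → ℝ))} [IsFiniteMeasure μ] (I : Finset ℤ)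
    (F : ℤ → ℝ → ℂ) : Integrable (fun x => ∏ k ∈ I, F k (scenery S f k x)) μ := by
  refine Integrable.of_bound
    (Finset.measurable_fun_prod I fun k _ =>
      measurable_apply_scenery S hf k (F k)).aestronglyMeasurable
    (∏ k ∈ I, (‖F k 1‖ + ‖F k (-1)‖)) (ae_of_all _ fun x => ?_)
  rw [norm_prod]
  exact Finset.prod_le_prod (fun _ _ => norm_nonneg _) fun k _ => norm_apply_scenery_le S f k _ x

lemma integral_uniform_ite {t : ℝ} (ht : t ∈ Set.Icc (0 : ℝ) 1) (A B : ℂ) :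
    ∫ z in Set.Ioo (0 : ℝ) 1, (if z ≤ t then A else B) = (t : ℂ) * A + (1 - (t : ℂ)) * B := by
  have hmeas : Measurable fun z : ℝ => if z ≤ t then A else B :=
    Measurable.ite measurableSet_Iic measurable_const measurable_const
  have hintble : ∀ a b : ℝ, IntervalIntegrable (fun z : ℝ => if z ≤ t then A else B) volume a b :=
    fun a b => (intervalIntegrable_const (c := ‖A‖ + ‖B‖)).mono_fun hmeas.aestronglyMeasurable
      (ae_of_all _ fun z => by
        rw [Real.norm_of_nonneg (by positivity : 0 ≤ ‖A‖ + ‖B‖)]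
        dsimp only
        split_ifs <;> simp)
  rw [← integral_Ioc_eq_integral_Ioo, ← intervalIntegral.integral_of_le zero_le_one,
    ← intervalIntegral.integral_add_adjacent_intervals (hintble 0 t) (hintble t 1)]
  congr 1
  · rw [intervalIntegral.integral_of_le ht.1,
      setIntegral_congr_fun (g := fun _ => A) measurableSet_Ioc fun z hz => if_pos hz.2,
      ← intervalIntegral.integral_of_le ht.1]
    simp
  · rw [intervalIntegral.integral_of_le ht.2,
      setIntegral_congr_fun (g := fun _ => B) measurableSet_Ioc fun z hz => if_neg hz.1.not_ge,
      ← intervalIntegral.integral_of_le ht.2]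
    simp

lemma integral_iid_prod_ite {μ₁ : Measure (ℤ → ℝ)} (hμ₁ : IsIIDUniform μ₁) (I : Finset ℤ)
    {t : ℤ → ℝ} (ht : ∀ k, t k ∈ Set.Icc (0 : ℝ) 1) (A B : ℤ → ℂ) :
    ∫ z, ∏ k ∈ I, (if z k ≤ t k then A k else B k) ∂μ₁ =
      ∏ k ∈ I, ((t k : ℂ) * A k + (1 - (t k : ℂ)) * B k) := by
  obtain ⟨hprob, hind, hlaw⟩ := hμ₁
  have hmeas : ∀ k, Measurable fun y : ℝ => if y ≤ t k then A k else B k := fun k =>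
    Measurable.ite measurableSet_Iic measurable_const measurable_const
  have hindI : iIndepFun (fun (i : I) (z : ℤ → ℝ) => z i) μ₁ :=
    hind.precomp Subtype.val_injective
  have h := iIndepFun.integral_fun_prod_comp (X := fun (i : I) (z : ℤ → ℝ) => z i) (μ := μ₁)
    (f := fun i y => if y ≤ t i then A i else B i) hindI
    (fun i => (measurable_pi_apply (i : ℤ)).aemeasurable)
    (fun i => (hmeas i).aestronglyMeasurable)
  calc _ = ∫ z, ∏ i : I, (if z (i : ℤ) ≤ t i then A i else B i) ∂μ₁ := by
        congr 1 with z
        exact (Finset.prod_coe_sort I fun k => if z k ≤ t k then A k else B k).symm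
    _ = ∏ i : I, ∫ z, (if z (i : ℤ) ≤ t i then A i else B i) ∂μ₁ := h
    _ = ∏ i : I, ((t i : ℂ) * A i + (1 - (t i : ℂ)) * B i) := by
        refine Finset.prod_congr rfl fun i _ => ?_
        rw [← integral_uniform_ite (ht i), ← hlaw i,
          integral_map (measurable_pi_apply _).aemeasurable (hmeas i).aestronglyMeasurable]
    _ = _ := Finset.prod_coe_sort I fun k => (t k : ℂ) * A k + (1 - (t k : ℂ)) * B k

lemma integral_prod_scenery (S : Matrix (Fin d) (Fin d) ℤ) {f : Torus d → ℝ}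
    (hf : Measurable f) (hrange : ∀ x, f x ∈ Set.Icc (0 : ℝ) 1)
    {μ₁ : Measure (ℤ → ℝ)} (hμ₁ : IsIIDUniform μ₁) (I : Finset ℤ) (F : ℤ → ℝ → ℂ) :
    ∫ x, ∏ k ∈ I, F k (scenery S f k x) ∂((volume : Measure (Torus d)).prod μ₁) =
      ∫ x : Torus d, ∏ k ∈ I, siteMean f (F k) (torusAut (S ^ k) x) := by
  have hprob := hμ₁.1
  rw [integral_prod _ (integrable_prod_scenery S hf I F)]
  congr 1 with x
  simp_rw [apply_scenery]
  exact integral_iid_prod_ite hμ₁ I (fun k => hrange (torusAut (S ^ k) x)) _ _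

lemma norm_siteMean_le {f : Torus d → ℝ} (hrange : ∀ x, f x ∈ Set.Icc (0 : ℝ) 1) {F : ℝ → ℂ}
    (h₁ : ‖F 1‖ ≤ 1) (h₂ : ‖F (-1)‖ ≤ 1) (x : Torus d) : ‖siteMean f F x‖ ≤ 1 := by
  obtain ⟨h0, h1⟩ := hrange x
  have e₁ : ‖(f x : ℂ)‖ = f x := by simp [abs_of_nonneg h0]
  have e₂ : ‖1 - (f x : ℂ)‖ = 1 - f x := by
    rw [← Complex.ofReal_one, ← Complex.ofReal_sub, Complex.norm_real,
      Real.norm_of_nonneg (by linarith)]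
  calc _ ≤ ‖(f x : ℂ) * F 1‖ + ‖(1 - (f x : ℂ)) * F (-1)‖ := norm_add_le _ _
    _ ≤ f x * 1 + (1 - f x) * 1 := by
        rw [norm_mul, norm_mul, e₁, e₂]
        gcongr
    _ = 1 := by ring

lemma holderBound_siteMean {η K : ℝ} {f : Torus d → ℝ}
    (hK : HolderBound η K fun x => (f x : ℂ)) (F : ℝ → ℂ) :
    HolderBound η (‖F 1 - F (-1)‖ * K) (siteMean f F) := fun x y => by
  have e : siteMean f F x - siteMean f F y = (F 1 - F (-1)) * ((f x : ℂ) - f y) := by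
    unfold siteMean; ring
  rw [e, norm_mul, mul_assoc]
  exact mul_le_mul_of_nonneg_left (hK x y) (norm_nonneg _)

end Scenery

section Stationarity

variable {d : ℕ}

lemma measurePreserving_reindex {μ₁ : Measure (ℤ → ℝ)} (hμ₁ : IsIIDUniform μ₁) {e : ℤ → ℤ}
    (he : Function.Injective e) : MeasurePreserving (fun (z : ℤ → ℝ) k => z (e k)) μ₁ μ₁ := by
  obtain ⟨hprob, hind, hlaw⟩ := hμ₁
  refine ⟨measurable_pi_lambda _ fun k => measurable_pi_apply _, ?_⟩
  have hind' : iIndepFun (fun (k : ℤ) (z : ℤ → ℝ) => z (e k)) μ₁ := hind.precomp he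
  have h₁ := hind.map_fun_eq_infinitePi_map fun k => measurable_pi_apply k
  have h₂ := hind'.map_fun_eq_infinitePi_map fun k => measurable_pi_apply (e k)
  simp only [hlaw] at h₁ h₂
  rw [h₂, ← h₁]
  exact Measure.map_id

lemma measurePreserving_shift {S : Matrix (Fin d) (Fin d) ℤ} (hdet : S.det = 1)
    {μ₁ : Measure (ℤ → ℝ)} (hμ₁ : IsIIDUniform μ₁) (j : ℤ) :
    MeasurePreserving
      (Prod.map (torusAut (S ^ j)) fun (z : ℤ → ℝ) k => z (k + j))
      ((volume : Measure (Torus d)).prod μ₁) ((volume : Measure (Torus d)).prod μ₁) :=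
  have := hμ₁.1
  (measurePreserving_torusAut hdet j).prod
    (measurePreserving_reindex hμ₁ (add_left_injective j))

lemma scenery_shift {S : Matrix (Fin d) (Fin d) ℤ} (hdet : S.det = 1) (f : Torus d → ℝ)
    (j k : ℤ) (x : Torus d × (ℤ → ℝ)) :
    scenery S f k (Prod.map (torusAut (S ^ j)) (fun (z : ℤ → ℝ) k => z (k + j)) x) =
      scenery S f (k + j) x := by
  simp only [scenery, Prod.map_fst, Prod.map_snd]
  rw [torusAut_zpow_add hdet]

lemma scenery_inv {S : Matrix (Fin d) (Fin d) ℤ} (hdet : S.det = 1) (f : Torus d → ℝ)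
    (k : ℤ) (x : Torus d × (ℤ → ℝ)) :
    scenery S⁻¹ f k (Prod.map id (fun (z : ℤ → ℝ) k => z (-k)) x) = scenery S f (-k) x := by
  simp only [scenery, Prod.map_fst, Prod.map_snd, id]
  rw [Matrix.inv_zpow' (by simp [hdet])]

lemma isStationarySeq_scenery {S : Matrix (Fin d) (Fin d) ℤ} (hdet : S.det = 1)
    {f : Torus d → ℝ} (hf : Measurable f) {μ₁ : Measure (ℤ → ℝ)} (hμ₁ : IsIIDUniform μ₁) :
    IsStationarySeq ((volume : Measure (Torus d)).prod μ₁) (scenery S f) := fun j q k => by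
  have h := measurePreserving_shift hdet hμ₁ j
  have hm : Measurable fun (x : Torus d × (ℤ → ℝ)) (i : Fin q) => scenery S f (k i) x :=
    measurable_pi_lambda _ fun i => measurable_apply_scenery S hf (k i) id
  conv_rhs => rw [← h.map_eq]
  rw [Measure.map_map hm h.measurable]
  congr 1
  ext x i
  exact (scenery_shift hdet f j (k i) x).symm

lemma siteMean_ofReal (f : Torus d → ℝ) (x : Torus d) :
    siteMean f (fun t => (t : ℂ)) x = 2 * (f x : ℂ) - 1 := by
  unfold siteMean
  push_cast
  ring

lemma integral_scenery_complex {S : Matrix (Fin d) (Fin d) ℤ} (hdet : S.det = 1)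
    {f : Torus d → ℝ} (hf : Measurable f) (hfc : Continuous f)
    (hrange : ∀ x, f x ∈ Set.Icc (0 : ℝ) 1)
    (hmean : (∫ x, f x ∂(volume : Measure (Torus d))) = 1 / 2)
    {μ₁ : Measure (ℤ → ℝ)} (hμ₁ : IsIIDUniform μ₁) (k : ℤ) :
    ∫ x, (scenery S f k x : ℂ) ∂((volume : Measure (Torus d)).prod μ₁) = 0 := by
  have h := integral_prod_scenery S hf hrange hμ₁ {k} fun _ t => (t : ℂ)
  simp only [Finset.prod_singleton, siteMean_ofReal] at h
  have hc : Continuous fun x : Torus d => (f x : ℂ) := Complex.continuous_ofReal.comp hfc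
  rw [h, integral_comp_torusAut hdet k (F := fun x => 2 * (f x : ℂ) - 1) (by fun_prop),
    integral_sub (hc.integrable_torus.const_mul 2) (integrable_const _), integral_const_mul,
    integral_complex_ofReal, hmean]
  simp

lemma abs_scenery (S : Matrix (Fin d) (Fin d) ℤ) (f : Torus d → ℝ) (k : ℤ)
    (x : Torus d × (ℤ → ℝ)) : |scenery S f k x| = 1 := by
  rw [apply_scenery S f k (fun t => |t|)]
  simp

lemma cond3_scenery {S : Matrix (Fin d) (Fin d) ℤ} (hdet : S.det = 1)
    {f : Torus d → ℝ} (hf : Measurable f) (hfc : Continuous f)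
    (hrange : ∀ x, f x ∈ Set.Icc (0 : ℝ) 1)
    (hmean : (∫ x, f x ∂(volume : Measure (Torus d))) = 1 / 2)
    {μ₁ : Measure (ℤ → ℝ)} (hμ₁ : IsIIDUniform μ₁) :
    Cond3 ((volume : Measure (Torus d)).prod μ₁) (scenery S f) := by
  have := hμ₁.1
  refine ⟨isStationarySeq_scenery hdet hf hμ₁, fun k => ?_, fun k => ?_⟩
  · have h := integral_scenery_complex hdet hf hfc hrange hmean hμ₁ k
    rw [integral_complex_ofReal] at h
    exact_mod_cast h
  · refine Integrable.of_bound
      (measurable_apply_scenery S hf k fun t => t ^ 4).aestronglyMeasurable 1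
      (ae_of_all _ fun x => ?_)
    rw [Real.norm_eq_abs, abs_pow, abs_scenery, one_pow]

end Stationarity

section Mixing

variable {d : ℕ}

lemma exists_scenery_mixing (hd : 0 < d) {S : Matrix (Fin d) (Fin d) ℤ} (hdet : S.det = 1)
    (hEig : NoRootOfUnityEigenvalue S) {η : ℝ} (hη : 0 < η)
    {f : Torus d → ℝ} (hf : Measurable f) (hrange : ∀ x, f x ∈ Set.Icc (0 : ℝ) 1)
    (hfh : IsHolder η f) {μ₁ : Measure (ℤ → ℝ)} (hμ₁ : IsIIDUniform μ₁) :
    ∃ C Λ ρ : ℝ, 0 ≤ C ∧ 1 ≤ Λ ∧ 0 < ρ ∧ ρ < 1 ∧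
      ∀ (I J : Finset ℤ) (F : ℤ → ℝ → ℂ) (n : ℤ) (p s : ℕ), 1 ≤ p →
        (∀ k, ‖F k 1‖ ≤ 1) → (∀ k, ‖F k (-1)‖ ≤ 1) →
        (∀ k ∈ I, k ≤ n) → (∀ k ∈ J, n + p ≤ k ∧ k ≤ n + p + s) →
        ‖covC ((volume : Measure (Torus d)).prod μ₁)
            (fun x => ∏ k ∈ I, F k (scenery S f k x)) (fun x => ∏ k ∈ J, F k (scenery S f k x))‖ ≤
          C * (1 + ∑ k ∈ I, ‖F k 1 - F k (-1)‖ + ∑ k ∈ J, ‖F k 1 - F k (-1)‖) * Λ ^ s * ρ ^ p := by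
  obtain ⟨K, hK, hfK⟩ := HolderBound.of_isHolder hη hfh
  obtain ⟨C, Λ, ρ, hC, hΛ, hρ, hρ1, H⟩ := exists_decorrelation_prod hd hdet hEig hη
  refine ⟨C * (1 + K), Λ, ρ, by positivity, hΛ, hρ, hρ1, fun I J F n p s hp h₁ h₂ hI hJ => ?_⟩
  have hdisj : Disjoint I J := Finset.disjoint_left.2 fun k hkI hkJ => by
    have := hI k hkI
    have := (hJ k hkJ).1
    omega
  have h := H I J (fun k => siteMean f (F k)) (fun k => siteMean f (F k))
    (fun k => ‖F k 1 - F k (-1)‖ * K) (fun k => ‖F k 1 - F k (-1)‖ * K) n p s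
    (fun k => by positivity) (fun k => by positivity)
    (fun k => norm_siteMean_le hrange (h₁ k) (h₂ k))
    (fun k => norm_siteMean_le hrange (h₁ k) (h₂ k))
    (fun k => holderBound_siteMean hfK (F k)) (fun k => holderBound_siteMean hfK (F k)) hI hJ
  simp_rw [← Finset.prod_union hdisj] at h
  unfold covC
  simp_rw [← Finset.prod_union hdisj, integral_prod_scenery S hf hrange hμ₁]
  refine h.trans ?_
  rw [← Finset.sum_mul, ← Finset.sum_mul]
  set a := ∑ k ∈ I, ‖F k 1 - F k (-1)‖
  set b := ∑ k ∈ J, ‖F k 1 - F k (-1)‖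
  have ha : 0 ≤ a := Finset.sum_nonneg fun _ _ => norm_nonneg _
  have hb : 0 ≤ b := Finset.sum_nonneg fun _ _ => norm_nonneg _
  have hab : 1 + a * K + b * K ≤ (1 + K) * (1 + a + b) := by nlinarith
  calc C * (1 + a * K + b * K) * Λ ^ s * ρ ^ p
      ≤ C * ((1 + K) * (1 + a + b)) * Λ ^ s * ρ ^ p := by gcongr
    _ = _ := by ring

end Mixing

section Combinatorics

lemma sum_pow_injOn_le {κ : ℝ} (h0 : 0 ≤ κ) (h1 : κ < 1) {s : Finset ℕ} {u : ℕ → ℕ}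
    (hu : Set.InjOn u s) : ∑ b ∈ s, κ ^ u b ≤ (1 - κ)⁻¹ := by
  rw [← Finset.sum_image (g := u) (f := fun j => κ ^ j) hu, ← tsum_geometric_of_lt_one h0 h1]
  exact (summable_geometric_of_lt_one h0 h1).sum_le_tsum _ fun _ _ => by positivity

/-- The geometric weight of the distance between two natural numbers. -/
def distWeight (κ : ℝ) (a b : ℕ) : ℝ := κ ^ (a - b + (b - a))

lemma distWeight_comm (κ : ℝ) (a b : ℕ) : distWeight κ a b = distWeight κ b a := by
  unfold distWeight
  rw [add_comm]

lemma distWeight_nonneg {κ : ℝ} (h0 : 0 ≤ κ) (a b : ℕ) : 0 ≤ distWeight κ a b :=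
  pow_nonneg h0 _

lemma sum_sum_distWeight_le {κ : ℝ} (h0 : 0 ≤ κ) (h1 : κ < 1) (N : ℕ) :
    ∑ a ∈ Finset.range N, ∑ b ∈ Finset.range N, distWeight κ a b ≤ N * (2 * (1 - κ)⁻¹) := by
  have h : ∀ a ∈ Finset.range N, ∑ b ∈ Finset.range N, distWeight κ a b ≤ 2 * (1 - κ)⁻¹ := by
    intro a _
    rw [← Finset.sum_filter_add_sum_filter_not _ (fun b => b ≤ a), two_mul]
    refine add_le_add (sum_pow_injOn_le h0 h1 ?_) (sum_pow_injOn_le h0 h1 ?_)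
    · intro x hx y hy hxy
      simp only [Finset.coe_filter, Set.mem_ofPred_eq] at hx hy hxy
      omega
    · intro x hx y hy hxy
      simp only [Finset.coe_filter, Set.mem_ofPred_eq] at hx hy hxy
      omega
  simpa using Finset.sum_le_card_nsmul _ _ _ h

/-- The sum over the three pairings of four indices of the products of pair weights. -/
def pairingSum (g : ℕ → ℕ → ℝ) (a b c e : ℕ) : ℝ :=
  g a b * g c e + g a c * g b e + g a e * g b c

lemma le_mul_pairingSum {g : ℕ → ℕ → ℝ} (hg : ∀ a b, 0 ≤ g a b) (hgc : ∀ a b, g a b = g b a)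
    {C : ℝ} (hC : 0 ≤ C) {m : ℕ → ℕ → ℕ → ℕ → ℝ} (h₁₂ : ∀ a b c e, m a b c e = m b a c e)
    (h₂₃ : ∀ a b c e, m a b c e = m a c b e) (h₃₄ : ∀ a b c e, m a b c e = m a b e c)
    (hm : ∀ a b c e, a ≤ b → b ≤ c → c ≤ e → m a b c e ≤ C * (g a b * g c e))
    (a b c e : ℕ) :
    m a b c e ≤ C * pairingSum g a b c e := by
  have p₁₂ : ∀ a b c e, pairingSum g a b c e = pairingSum g b a c e := fun a b c e => by
    unfold pairingSum
    rw [hgc a b]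
    ring
  have p₂₃ : ∀ a b c e, pairingSum g a b c e = pairingSum g a c b e := fun a b c e => by
    unfold pairingSum
    rw [hgc b c]
    ring
  have p₃₄ : ∀ a b c e, pairingSum g a b c e = pairingSum g a b e c := fun a b c e => by
    unfold pairingSum
    rw [hgc c e]
    ring
  have hsorted : ∀ a b c e, a ≤ b → b ≤ c → c ≤ e → m a b c e ≤ C * pairingSum g a b c e :=
    fun a b c e hab hbc hce => (hm a b c e hab hbc hce).trans <| mul_le_mul_of_nonneg_left (by
      have := mul_nonneg (hg a c) (hg b e)
      have := mul_nonneg (hg a e) (hg b c)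
      unfold pairingSum
      linarith) hC
  wlog hab : a ≤ b generalizing a b
  · rw [h₁₂, p₁₂]
    exact this b a (le_of_not_ge hab)
  wlog hce : c ≤ e generalizing c e
  · rw [h₃₄, p₃₄]
    exact this e c (le_of_not_ge hce)
  have hins : ∀ a b c e, a ≤ b → a ≤ c → c ≤ e → m a b c e ≤ C * pairingSum g a b c e := by
    intro a b c e hab hac hce
    rcases le_total b c with hbc | hbc
    · exact hsorted a b c e hab hbc hce
    rw [h₂₃, p₂₃]
    rcases le_total b e with hbe | hbe
    · exact hsorted a c b e hac hbc hbe
    rw [h₃₄, p₃₄]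
    exact hsorted a c e b hac hce hbe
  rcases le_total a c with hac | hac
  · exact hins a b c e hab hac hce
  · rw [h₂₃, p₂₃, h₁₂, p₁₂]
    rw [h₃₄, p₃₄, h₂₃, p₂₃]
    exact hins c e a b hce hac hab

lemma sum_pairingSum_le {κ : ℝ} (h0 : 0 ≤ κ) (h1 : κ < 1) (N : ℕ) :
    ∑ a ∈ Finset.range N, ∑ b ∈ Finset.range N, ∑ c ∈ Finset.range N, ∑ e ∈ Finset.range N,
      pairingSum (distWeight κ) a b c e ≤ 3 * (2 * (1 - κ)⁻¹) ^ 2 * (N : ℝ) ^ 2 := by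
  set R := Finset.range N
  set g := distWeight κ
  set W := ∑ a ∈ R, ∑ b ∈ R, g a b with hW
  have e₁ : ∑ a ∈ R, ∑ b ∈ R, ∑ c ∈ R, ∑ e ∈ R, g a b * g c e = W * W := by
    simp_rw [← Finset.mul_sum, ← Finset.sum_mul]
    rfl
  have e₂ : ∑ a ∈ R, ∑ b ∈ R, ∑ c ∈ R, ∑ e ∈ R, g a c * g b e = W * W := by
    rw [← e₁]
    refine Finset.sum_congr rfl fun a _ => ?_
    rw [Finset.sum_comm]
  have e₃ : ∑ a ∈ R, ∑ b ∈ R, ∑ c ∈ R, ∑ e ∈ R, g a e * g b c = W * W := by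
    rw [← e₂]
    refine Finset.sum_congr rfl fun a _ => Finset.sum_congr rfl fun b _ => ?_
    rw [Finset.sum_comm]
  have hW0 : 0 ≤ W := Finset.sum_nonneg fun a _ => Finset.sum_nonneg fun b _ =>
    distWeight_nonneg h0 a b
  have hWN : W ≤ N * (2 * (1 - κ)⁻¹) := sum_sum_distWeight_le h0 h1 N
  simp only [pairingSum, Finset.sum_add_distrib, e₁, e₂, e₃]
  nlinarith [mul_le_mul hWN hWN hW0 (hW0.trans hWN)]

end Combinatorics

section Moments

variable {d : ℕ}

lemma abs_integral_scenery_mul_le (S : Matrix (Fin d) (Fin d) ℤ) (f : Torus d → ℝ)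
    {μ : Measure (Torus d × (ℤ → ℝ))} [IsProbabilityMeasure μ] (a b c e : ℤ) :
    |∫ x, scenery S f a x * scenery S f b x * scenery S f c x * scenery S f e x ∂μ| ≤ 1 := by
  have h := norm_integral_le_of_norm_le_const (μ := μ) (C := 1)
    (f := fun x => scenery S f a x * scenery S f b x * scenery S f c x * scenery S f e x)
    (ae_of_all _ fun x => by simp [abs_scenery])
  simpa using h

lemma exists_abs_integral_four_le (hd : 0 < d) {S : Matrix (Fin d) (Fin d) ℤ}
    (hdet : S.det = 1) (hEig : NoRootOfUnityEigenvalue S) {η : ℝ} (hη : 0 < η)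
    {f : Torus d → ℝ} (hf : Measurable f) (hfc : Continuous f)
    (hrange : ∀ x, f x ∈ Set.Icc (0 : ℝ) 1) (hfh : IsHolder η f)
    (hmean : (∫ x, f x ∂(volume : Measure (Torus d))) = 1 / 2)
    {μ₁ : Measure (ℤ → ℝ)} (hμ₁ : IsIIDUniform μ₁) :
    ∃ C ρ : ℝ, 0 ≤ C ∧ 0 < ρ ∧ ρ < 1 ∧ ∀ (a b c : ℤ) (p : ℕ), a ≤ c → b ≤ c →
      |∫ x, scenery S f a x * scenery S f b x * scenery S f c x * scenery S f (c + p) x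
        ∂((volume : Measure (Torus d)).prod μ₁)| ≤ C * ρ ^ p := by
  have hprob := hμ₁.1
  obtain ⟨C, Λ, ρ, hC, -, hρ, hρ1, H⟩ := exists_scenery_mixing hd hdet hEig hη hf hrange hfh hμ₁
  refine ⟨9 * C + 1, ρ, by positivity, hρ, hρ1, fun a b c p hac hbc => ?_⟩
  rcases Nat.eq_zero_or_pos p with rfl | hp
  · refine (abs_integral_scenery_mul_le S f _ _ _ _).trans ?_
    simp [hC]
  let F : ℤ → ℝ → ℂ := fun k t =>
    (if k = a then (t : ℂ) else 1) * (if k = b then (t : ℂ) else 1) *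
      (if k = c then (t : ℂ) else 1) * (if k = c + p then (t : ℂ) else 1)
  have hF₁ : ∀ k, F k 1 = 1 := fun k => by simp [F]
  have hF₂ : ∀ k, ‖F k (-1)‖ ≤ 1 := fun k => by
    simp only [F]
    split_ifs <;> simp
  have hF₃ : ∀ k, ‖F k 1 - F k (-1)‖ ≤ 2 := fun k => by
    refine (norm_sub_le _ _).trans ?_
    have := hF₂ k
    rw [hF₁, norm_one]
    linarith
  have hI : ∑ k ∈ ({a, b, c} : Finset ℤ), ‖F k 1 - F k (-1)‖ ≤ 6 := by
    refine (Finset.sum_le_card_nsmul _ _ 2 fun k _ => hF₃ k).trans ?_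
    have : (({a, b, c} : Finset ℤ).card : ℝ) ≤ 3 := by exact_mod_cast Finset.card_le_three
    rw [nsmul_eq_mul]
    linarith
  have hprodI : ∀ x, ∏ k ∈ ({a, b, c} : Finset ℤ), F k (scenery S f k x) =
      scenery S f a x * scenery S f b x * scenery S f c x := fun x => by
    have hna : c + (p : ℤ) ≠ a := by omega
    have hnb : c + (p : ℤ) ≠ b := by omega
    have hnc : p ≠ 0 := by omega
    simp only [F, Finset.prod_mul_distrib, Finset.prod_ite_eq']
    simp [hna, hnb, hnc]
  have hprodJ : ∀ x, ∏ k ∈ ({c + (p : ℤ)} : Finset ℤ), F k (scenery S f k x) =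
      scenery S f (c + p) x := fun x => by
    have hna : c + (p : ℤ) ≠ a := by omega
    have hnb : c + (p : ℤ) ≠ b := by omega
    have hnc : p ≠ 0 := by omega
    simp [F, hna, hnb, hnc]
  have h := H {a, b, c} {c + (p : ℤ)} F c p 0 hp (fun k => by simp [hF₁]) hF₂
    (by simp [hac, hbc]) (by simp)
  simp only [covC, hprodI, hprodJ, integral_scenery_complex hdet hf hfc hrange hmean hμ₁,
    mul_zero, sub_zero, pow_zero, mul_one, Finset.sum_singleton] at h
  have hcast : ∫ x, (scenery S f a x : ℂ) * scenery S f b x * scenery S f c x *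
        scenery S f (c + p) x ∂((volume : Measure (Torus d)).prod μ₁) =
      ((∫ x, scenery S f a x * scenery S f b x * scenery S f c x * scenery S f (c + p) x
        ∂((volume : Measure (Torus d)).prod μ₁) : ℝ) : ℂ) := by
    rw [← integral_complex_ofReal]
    push_cast
    rfl
  rw [hcast, Complex.norm_real, Real.norm_eq_abs] at h
  have hJ := hF₃ (c + p)
  calc _ ≤ C * (1 + ∑ k ∈ ({a, b, c} : Finset ℤ), ‖F k 1 - F k (-1)‖ +
        ‖F (c + p) 1 - F (c + p) (-1)‖) * ρ ^ p := h
    _ ≤ C * (1 + 6 + 2) * ρ ^ p := by gcongr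
    _ ≤ (9 * C + 1) * ρ ^ p := by gcongr; linarith

lemma integral_four_inv {S : Matrix (Fin d) (Fin d) ℤ} (hdet : S.det = 1)
    {f : Torus d → ℝ} (hf : Measurable f) {μ₁ : Measure (ℤ → ℝ)} (hμ₁ : IsIIDUniform μ₁)
    (a b c e : ℤ) :
    ∫ x, scenery S⁻¹ f a x * scenery S⁻¹ f b x * scenery S⁻¹ f c x * scenery S⁻¹ f e x
        ∂((volume : Measure (Torus d)).prod μ₁) =
      ∫ x, scenery S f (-a) x * scenery S f (-b) x * scenery S f (-c) x * scenery S f (-e) x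
        ∂((volume : Measure (Torus d)).prod μ₁) := by
  have hprob := hμ₁.1
  have hΘ := (MeasurePreserving.id (volume : Measure (Torus d))).prod
    (measurePreserving_reindex hμ₁ neg_injective)
  have hm := fun k => measurable_apply_scenery S⁻¹ hf k id
  simp only [id] at hm
  conv_lhs => rw [← hΘ.map_eq]
  rw [integral_map hΘ.measurable.aemeasurable
    (by fun_prop : Measurable _).aestronglyMeasurable]
  simp only [scenery_inv hdet]

lemma exists_abs_integral_four_le_pairing (hd : 0 < d) {S : Matrix (Fin d) (Fin d) ℤ}
    (hdet : S.det = 1) (hEig : NoRootOfUnityEigenvalue S) {η : ℝ} (hη : 0 < η)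
    {f : Torus d → ℝ} (hf : Measurable f) (hfc : Continuous f)
    (hrange : ∀ x, f x ∈ Set.Icc (0 : ℝ) 1) (hfh : IsHolder η f)
    (hmean : (∫ x, f x ∂(volume : Measure (Torus d))) = 1 / 2)
    {μ₁ : Measure (ℤ → ℝ)} (hμ₁ : IsIIDUniform μ₁) :
    ∃ C κ : ℝ, 0 ≤ C ∧ 0 ≤ κ ∧ κ < 1 ∧ ∀ a b c e : ℕ, a ≤ b → b ≤ c → c ≤ e →
      |∫ x, scenery S f a x * scenery S f b x * scenery S f c x * scenery S f e x
        ∂((volume : Measure (Torus d)).prod μ₁)| ≤ C * (distWeight κ a b * distWeight κ c e) := by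
  obtain ⟨C, ρ, hC, hρ, hρ1, H⟩ :=
    exists_abs_integral_four_le hd hdet hEig hη hf hfc hrange hfh hmean hμ₁
  have hdet' : S⁻¹.det = 1 := by simp [Matrix.det_nonsing_inv, hdet]
  obtain ⟨C', ρ', hC', hρ', hρ1', H'⟩ := exists_abs_integral_four_le hd hdet'
    (noRootOfUnityEigenvalue_inv hdet hEig) hη hf hfc hrange hfh hmean hμ₁
  set σ := max ρ ρ' with hσ
  have hσ0 : 0 ≤ σ := hρ.le.trans (le_max_left _ _)
  refine ⟨max C C', Real.sqrt σ, hC.trans (le_max_left _ _), Real.sqrt_nonneg _,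
    (Real.sqrt_lt' one_pos).2 (by rw [one_pow]; exact max_lt hρ1 hρ1'), fun a b c e hab hbc hce => ?_⟩
  set E := ∫ x, scenery S f a x * scenery S f b x * scenery S f c x * scenery S f e x
    ∂((volume : Measure (Torus d)).prod μ₁) with hE
  have h₁ : |E| ≤ max C C' * σ ^ (e - c) := by
    have h := H a b c (e - c) (by omega) (by omega)
    rw [show (c : ℤ) + ((e - c : ℕ) : ℤ) = e by omega] at h
    refine h.trans ?_
    gcongr
    · exact le_max_left _ _
    · exact le_max_left _ _
  have h₂ : |E| ≤ max C C' * σ ^ (b - a) := by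
    have h := H' (-e) (-c) (-b) (b - a) (by omega) (by omega)
    rw [show -(b : ℤ) + ((b - a : ℕ) : ℤ) = -a by omega, integral_four_inv hdet hf hμ₁] at h
    simp only [neg_neg] at h
    have hEeq : E = ∫ x, scenery S f e x * scenery S f c x * scenery S f b x * scenery S f a x
        ∂((volume : Measure (Torus d)).prod μ₁) := by
      rw [hE]
      congr 1 with x
      ring
    rw [hEeq]
    refine h.trans ?_
    gcongr
    · exact le_max_right _ _
    · exact le_max_right _ _
  have hM : 0 ≤ max C C' := hC.trans (le_max_left _ _)
  refine le_of_sq_le_sq ?_ (by unfold distWeight; positivity)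
  calc |E| ^ 2 = |E| * |E| := sq _
    _ ≤ (max C C' * σ ^ (b - a)) * (max C C' * σ ^ (e - c)) := by gcongr
    _ = (max C C' * (distWeight (Real.sqrt σ) a b * distWeight (Real.sqrt σ) c e)) ^ 2 := by
        unfold distWeight
        rw [Nat.sub_eq_zero_of_le hab, Nat.sub_eq_zero_of_le hce, zero_add, zero_add, mul_pow,
          mul_pow, ← pow_mul, ← pow_mul, mul_comm (b - a), mul_comm (e - c), pow_mul, pow_mul,
          Real.sq_sqrt hσ0]
        ring

lemma cond4_scenery (hd : 0 < d) {S : Matrix (Fin d) (Fin d) ℤ}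
    (hdet : S.det = 1) (hEig : NoRootOfUnityEigenvalue S) {η : ℝ} (hη : 0 < η)
    {f : Torus d → ℝ} (hf : Measurable f) (hfc : Continuous f)
    (hrange : ∀ x, f x ∈ Set.Icc (0 : ℝ) 1) (hfh : IsHolder η f)
    (hmean : (∫ x, f x ∂(volume : Measure (Torus d))) = 1 / 2)
    {μ₁ : Measure (ℤ → ℝ)} (hμ₁ : IsIIDUniform μ₁) :
    Cond4 ((volume : Measure (Torus d)).prod μ₁) (scenery S f) := by
  constructor
  · obtain ⟨C, ρ, hC, hρ, hρ1, H⟩ :=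
      exists_abs_integral_four_le hd hdet hEig hη hf hfc hrange hfh hmean hμ₁
    have hsum : Summable fun p : ℕ => C * (ρ ^ p + (p : ℝ) ^ 1 * ρ ^ p) :=
      ((summable_geometric_of_lt_one hρ.le hρ1).add
        (summable_pow_mul_geometric_of_norm_lt_one 1
          (by rwa [Real.norm_of_nonneg hρ.le]))).mul_left C
    refine hsum.of_nonneg_of_le (fun p => by positivity) fun p => ?_
    have h := H 0 0 0 p le_rfl le_rfl
    have hone : ∀ x, scenery S f 0 x * scenery S f 0 x = 1 := fun x => by
      rw [← abs_mul_abs_self, abs_scenery, one_mul]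
    simp only [hone, one_mul, zero_add] at h
    have hs : Real.sqrt (1 + (p : ℝ)) ≤ 1 + p :=
      Real.sqrt_le_iff.2 ⟨by positivity, by nlinarith [p.cast_nonneg (α := ℝ)]⟩ --arith [p.cast_nonneg (α := ℝ)])
    calc _ ≤ (1 + (p : ℝ)) * (C * ρ ^ p) := by gcongr
      _ = _ := by ring
  · obtain ⟨C, κ, hC, hκ, hκ1, H⟩ :=
      exists_abs_integral_four_le_pairing hd hdet hEig hη hf hfc hrange hfh hmean hμ₁
    refine ⟨C * (3 * (2 * (1 - κ)⁻¹) ^ 2), fun N _ => ?_⟩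
    have hle : ∀ a b c e : ℕ,
        |∫ x, scenery S f a x * scenery S f b x * scenery S f c x * scenery S f e x
          ∂((volume : Measure (Torus d)).prod μ₁)| ≤ C * pairingSum (distWeight κ) a b c e := by
      refine le_mul_pairingSum (distWeight_nonneg hκ) (distWeight_comm κ) hC
        (m := fun a b c e : ℕ =>
          |∫ x, scenery S f a x * scenery S f b x * scenery S f c x * scenery S f e x
            ∂((volume : Measure (Torus d)).prod μ₁)|) ?_ ?_ ?_ H <;>
      · intro a b c e
        congr 2 with x
        ring
    calc _ ≤ ∑ a ∈ Finset.range N, ∑ b ∈ Finset.range N, ∑ c ∈ Finset.range N,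
          ∑ e ∈ Finset.range N, C * pairingSum (distWeight κ) a b c e := by
          gcongr with a _ b _ c _ e _
          exact hle a b c e
      _ = C * ∑ a ∈ Finset.range N, ∑ b ∈ Finset.range N, ∑ c ∈ Finset.range N,
          ∑ e ∈ Finset.range N, pairingSum (distWeight κ) a b c e := by
          simp_rw [Finset.mul_sum]
      _ ≤ C * (3 * (2 * (1 - κ)⁻¹) ^ 2 * (N : ℝ) ^ 2) := by
          gcongr
          exact sum_pairingSum_le hκ hκ1 N
      _ = _ := by ring

end Moments

section Covariance

variable {d : ℕ}

lemma norm_exp_I_mul_sub_exp_neg_le (a : ℝ) :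
    ‖Complex.exp (Complex.I * ((a * 1 : ℝ) : ℂ)) - Complex.exp (Complex.I * ((a * (-1) : ℝ) : ℂ))‖ ≤
      2 * |a| := by
  have h₁ := Real.norm_exp_I_mul_ofReal_sub_one_le (x := a * 1)
  have h₂ := Real.norm_exp_I_mul_ofReal_sub_one_le (x := a * (-1))
  have h₃ := norm_sub_le (Complex.exp (Complex.I * ((a * 1 : ℝ) : ℂ)) - 1)
    (Complex.exp (Complex.I * ((a * (-1) : ℝ) : ℂ)) - 1)
  rw [sub_sub_sub_cancel_right] at h₃
  simp only [mul_one, mul_neg_one, norm_neg, Real.norm_eq_abs] at h₁ h₂ h₃ ⊢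
  linarith

lemma norm_covC_le_two {Ω : Type*} [MeasurableSpace Ω] {μ : Measure Ω} [IsProbabilityMeasure μ]
    {U V : Ω → ℂ} (hU : ∀ ω, ‖U ω‖ ≤ 1) (hV : ∀ ω, ‖V ω‖ ≤ 1) : ‖covC μ U V‖ ≤ 2 := by
  have h₁ : ‖∫ ω, U ω * V ω ∂μ‖ ≤ 1 := norm_integral_le_one fun ω => by
    rw [norm_mul]
    exact mul_le_one₀ (hU ω) (norm_nonneg _) (hV ω)
  have h₂ : ‖(∫ ω, U ω ∂μ) * ∫ ω, V ω ∂μ‖ ≤ 1 := by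
    rw [norm_mul]
    exact mul_le_one₀ (norm_integral_le_one hU) (norm_nonneg _) (norm_integral_le_one hV)
  exact (norm_sub_le _ _).trans (by linarith)

lemma tendsto_sqrt_mul_geometric {θ : ℝ} (h0 : 0 ≤ θ) (h1 : θ < 1) :
    Tendsto (fun s : ℕ => Real.sqrt s * θ ^ s) atTop (nhds 0) := by
  refine squeeze_zero (fun s => by positivity) (fun s => ?_)
    (tendsto_pow_const_mul_const_pow_of_abs_lt_one 1 (by rwa [abs_of_nonneg h0]))
  have hs : Real.sqrt s ≤ (s : ℝ) := by
    refine Real.sqrt_le_iff.2 ⟨s.cast_nonneg, ?_⟩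
    exact_mod_cast Nat.le_self_pow two_ne_zero s
  rw [pow_one]
  gcongr

lemma exp_I_mul_sum_eq_prod (S : Matrix (Fin d) (Fin d) ℤ) (f : Torus d → ℝ) (s : Finset ℕ)
    {α : ℕ → ℝ} {γ : ℤ → ℝ} (h : ∀ k ∈ s, γ k = α k) (x : Torus d × (ℤ → ℝ)) :
    Complex.exp (Complex.I * ((∑ k ∈ s, α k * scenery S f (k : ℤ) x : ℝ) : ℂ)) =
      ∏ k ∈ s.map Nat.castEmbedding,
        Complex.exp (Complex.I * ((γ k * scenery S f k x : ℝ) : ℂ)) := by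
  rw [Complex.ofReal_sum, Finset.mul_sum, Complex.exp_sum, Finset.prod_map]
  refine Finset.prod_congr rfl fun k hk => ?_
  rw [Nat.castEmbedding_apply, h k hk]

lemma cond5_scenery (hd : 0 < d) {S : Matrix (Fin d) (Fin d) ℤ}
    (hdet : S.det = 1) (hEig : NoRootOfUnityEigenvalue S) {η : ℝ} (hη : 0 < η)
    {f : Torus d → ℝ} (hf : Measurable f)
    (hrange : ∀ x, f x ∈ Set.Icc (0 : ℝ) 1) (hfh : IsHolder η f)
    {μ₁ : Measure (ℤ → ℝ)} (hμ₁ : IsIIDUniform μ₁) :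
    Cond5 ((volume : Measure (Torus d)).prod μ₁) (scenery S f) := by
  have hprob := hμ₁.1
  obtain ⟨C, Λ, ρ, hC, hΛ, hρ, hρ1, H⟩ := exists_scenery_mixing hd hdet hEig hη hf hrange hfh hμ₁
  have hΛ0 : 0 < Λ := one_pos.trans_le hΛ
  obtain ⟨r, hr⟩ := exists_pow_lt_of_lt_one (inv_pos.2 hΛ0) hρ1
  have hθ : Λ * ρ ^ (r + 1) < 1 := by
    calc Λ * ρ ^ (r + 1) ≤ Λ * ρ ^ r := by
          exact mul_le_mul_of_nonneg_left
            (pow_le_pow_of_le_one hρ.le hρ1.le (Nat.le_succ r)) hΛ0.le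
      _ < Λ * Λ⁻¹ := by gcongr
      _ = 1 := mul_inv_cancel₀ hΛ0.ne'
  refine ⟨2 * C + 2, by positivity, fun p s => Λ ^ s * ρ ^ p, r + 1, Nat.le_add_left 1 r,
    fun p s => by positivity, fun p s => ?_, ?_, fun n₁ n₂ n₃ n₄ h₁₂ h₂₃ h₃₄ α β => ?_⟩
  · exact mul_le_mul_of_nonneg_left (pow_le_pow_of_le_one hρ.le hρ1.le (Nat.le_succ p))
      (by positivity)
  · refine (tendsto_sqrt_mul_geometric (by positivity) hθ).congr fun s => ?_
    dsimp only
    rw [mul_pow, pow_mul]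
  set a := ∑ k ∈ Finset.Icc n₁ n₂, |α k|
  set b := ∑ k ∈ Finset.Icc n₃ n₄, |β k|
  have ha : 0 ≤ a := Finset.sum_nonneg fun _ _ => abs_nonneg _
  have hb : 0 ≤ b := Finset.sum_nonneg fun _ _ => abs_nonneg _
  rcases h₂₃.eq_or_lt with rfl | hlt
  · refine (norm_covC_le_two (fun x => ?_) (fun x => ?_)).trans ?_
    · rw [mul_comm, Complex.norm_exp_ofReal_mul_I]
    · rw [mul_comm, Complex.norm_exp_ofReal_mul_I]
    · simp only [Nat.sub_self, pow_zero, mul_one]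
      calc (2 : ℝ) = 2 * 1 * 1 := by norm_num
        _ ≤ (2 * C + 2) * (1 + a + b) * Λ ^ (n₄ - n₂) := by
            gcongr
            · linarith
            · linarith
            · exact one_le_pow₀ hΛ
  let γ : ℤ → ℝ := fun k => if k ≤ n₂ then α k.toNat else β k.toNat
  have hγα : ∀ k ∈ Finset.Icc n₁ n₂, γ k = α k := fun k hk => by
    have := (Finset.mem_Icc.1 hk).2
    simp [γ, this]
  have hγβ : ∀ k ∈ Finset.Icc n₃ n₄, γ k = β k := fun k hk => by
    have := hlt.trans_le (Finset.mem_Icc.1 hk).1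
    simp [γ, this]
  have h := H ((Finset.Icc n₁ n₂).map Nat.castEmbedding) ((Finset.Icc n₃ n₄).map Nat.castEmbedding)
    (fun k t => Complex.exp (Complex.I * ((γ k * t : ℝ) : ℂ))) n₂ (n₃ - n₂) (n₄ - n₃) (by omega)
    (fun k => by rw [mul_comm, Complex.norm_exp_ofReal_mul_I])
    (fun k => by rw [mul_comm, Complex.norm_exp_ofReal_mul_I])
    (by simp; omega) (by simp; omega)
  simp only [exp_I_mul_sum_eq_prod S f _ hγα, exp_I_mul_sum_eq_prod S f _ hγβ]
  refine h.trans ?_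
  have hsumα : ∑ k ∈ (Finset.Icc n₁ n₂).map Nat.castEmbedding,
      ‖Complex.exp (Complex.I * ((γ k * 1 : ℝ) : ℂ)) -
        Complex.exp (Complex.I * ((γ k * (-1) : ℝ) : ℂ))‖ ≤ 2 * a := by
    rw [Finset.sum_map, Finset.mul_sum]
    refine Finset.sum_le_sum fun k hk => ?_
    rw [← hγα k hk]
    exact norm_exp_I_mul_sub_exp_neg_le _
  have hsumβ : ∑ k ∈ (Finset.Icc n₃ n₄).map Nat.castEmbedding,
      ‖Complex.exp (Complex.I * ((γ k * 1 : ℝ) : ℂ)) -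
        Complex.exp (Complex.I * ((γ k * (-1) : ℝ) : ℂ))‖ ≤ 2 * b := by
    rw [Finset.sum_map, Finset.mul_sum]
    refine Finset.sum_le_sum fun k hk => ?_
    rw [← hγβ k hk]
    exact norm_exp_I_mul_sub_exp_neg_le _
  rw [mul_assoc _ (Λ ^ _)]
  gcongr ?_ * _
  calc _ ≤ C * (1 + 2 * a + 2 * b) := by gcongr
    _ ≤ (2 * C + 2) * (1 + a + b) := by nlinarith

end Covariance

end TorusScenery

/-- For an ergodic algebraic automorphism `T` of the torus and an η-Hölder
function `f : M → [0,1]` with mean `1/2`, the `±1`-valued random scenery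
`ξ_k(ω,z) = 2·1_{z_k ≤ f(T^k ω)} − 1` satisfies conditions (3), (4) and (5). -/
theorem statement15 (d : ℕ) (hd : 2 ≤ d) (S : Matrix (Fin d) (Fin d) ℤ) (hdet : S.det = 1)
    (hEig : NoRootOfUnityEigenvalue S) (η : ℝ) (hη : 0 < η)
    (f : Torus d → ℝ) (hfmeas : Measurable f) (hrange : ∀ x, f x ∈ Set.Icc (0 : ℝ) 1)
    (hfholder : IsHolder η f)
    (hmean : (∫ x, f x ∂(volume : Measure (Torus d))) = 1 / 2)
    (μ₁ : Measure (ℤ → ℝ)) (hμ₁ : IsIIDUniform μ₁) :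
    Cond3 ((volume : Measure (Torus d)).prod μ₁)
        (fun (k : ℤ) (x : Torus d × (ℤ → ℝ)) =>
          2 * (if x.2 k ≤ f (Titer (torusAut S) (torusAut S⁻¹) k x.1) then (1 : ℝ) else 0) - 1) ∧
    Cond4 ((volume : Measure (Torus d)).prod μ₁)
        (fun (k : ℤ) (x : Torus d × (ℤ → ℝ)) =>
          2 * (if x.2 k ≤ f (Titer (torusAut S) (torusAut S⁻¹) k x.1) then (1 : ℝ) else 0) - 1) ∧
    Cond5 ((volume : Measure (Torus d)).prod μ₁)
        (fun (k : ℤ) (x : Torus d × (ℤ → ℝ)) =>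
          2 * (if x.2 k ≤ f (Titer (torusAut S) (torusAut S⁻¹) k x.1) then (1 : ℝ) else 0) - 1) := by
  have hd0 : 0 < d := by omega
  obtain ⟨K, -, hK⟩ := TorusScenery.HolderBound.of_isHolder hη hfholder
  have hfc : Continuous f := Complex.continuous_re.comp (hK.continuous hη)
  simp only [TorusScenery.titer_torusAut]
  exact ⟨TorusScenery.cond3_scenery hdet hfmeas hfc hrange hmean hμ₁,
    TorusScenery.cond4_scenery hd0 hdet hEig hη hfmeas hfc hrange hfholder hmean hμ₁,
    TorusScenery.cond5_scenery hd0 hdet hEig hη hfmeas hrange hfholder hμ₁⟩
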